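/- arXiv:1207.5839 — 5 statements merged into one kernel-verified Lean document; each statement's English description precedes it below -/
import Mathlib

section
/- For every realization of the bounded time-varying delays, Push-Sum achieves average consensus at a geometric rate: for every compute node i with 1 ≤ i ≤ n, ŝ_i(t)/ŵ_i(t) → (1/n)·Σ_{j=1}^n x_j(0) as t → ∞; moreover there exists c₀ ∈ [0,1), depending only on G, P and B (not on the realization of the delays), such that, with D̂ = (B+1)·D + B + 1, the forward products F(1,t) = P̂(1)ᵀ·P̂(2)ᵀ⋯P̂(t)ᵀ satisfy τ₁(F(1,t)) ≤ c₀^{⌊t/(D̂+1)⌋}, where τ₁(M) = (1/2)·max_{i,j} Σ_k |M_{ik} − M_{jk}| is the coefficient of ergodicity. -/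
open Matrix Filter BigOperators
open scoped Classical

noncomputable section

/-- A directed graph on `Fin n` with `m` directed edges, edge `e` going from
`src e` to `tgt e`. -/
structure DGraph (n m : ℕ) where
  src : Fin m → Fin n
  tgt : Fin m → Fin n

/-- `y` is reachable from `x` by a directed path using at most `k` edges. -/
def ReachWithin {α : Type*} (adj : α → α → Prop) (k : ℕ) (x y : α) : Prop :=
  ∃ l : List α, l.length ≤ k ∧ List.Chain adj x l ∧
    (x :: l).getLast (List.cons_ne_nil x l) = y

/-- `D` is the diameter of the graph with adjacency relation `adj`: every node is
reachable from every node within `D` steps, and some ordered pair of nodes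
requires `D` steps. -/
def IsDiameter {α : Type*} (adj : α → α → Prop) (D : ℕ) : Prop :=
  (∀ x y, ReachWithin adj D x y) ∧ (∃ x y, ∀ k, ReachWithin adj k x y → D ≤ k)

/-- The adjacency relation of `G`. -/
def DGraph.adj {n m : ℕ} (G : DGraph n m) (a b : Fin n) : Prop :=
  ∃ e, G.src e = a ∧ G.tgt e = b

/-- Hypotheses of the Push-Sum random-delay model: no self-loops, distinct edges,
`P` column stochastic respecting `G` (hence with positive diagonal), and `G`
strongly connected. -/
structure DGraph.ValidCol {n m : ℕ} (G : DGraph n m) (P : Matrix (Fin n) (Fin n) ℝ) : Prop where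
  noSelf : ∀ e, G.src e ≠ G.tgt e
  edgeInj : ∀ e e', G.src e = G.src e' → G.tgt e = G.tgt e' → e = e'
  nonneg : ∀ i j, 0 ≤ P i j
  colSum : ∀ j, ∑ i, P i j = 1
  support : ∀ i j, 0 < P i j ↔ i = j ∨ ∃ e, G.src e = j ∧ G.tgt e = i
  connected : ∀ i j : Fin n, Relation.ReflTransGen G.adj i j

/-- Delay nodes: for every directed edge `e : Fin m`, every chain-length index
`ℓ : Fin B` (the parallel chain modelling a delay of `ℓ.1 + 1`), and every
position `k : Fin B` with `k ≤ ℓ` along that chain.  There are `m·B(B+1)/2`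
of them in total. -/
def DelayNode (m B : ℕ) : Type :=
  {q : Fin m × Fin B × Fin B // q.2.2.1 ≤ q.2.1.1}

instance (m B : ℕ) : Fintype (DelayNode m B) := by
  unfold DelayNode; infer_instance

instance (m B : ℕ) : DecidableEq (DelayNode m B) := by
  unfold DelayNode; infer_instance

namespace PushSumDelay

variable {n m B : ℕ}

/-- The edge a delay node belongs to. -/
def edgeOf (d : DelayNode m B) : Fin m := d.val.1
/-- The chain (of length `lenIdx d + 1`) a delay node belongs to. -/
def lenIdx (d : DelayNode m B) : ℕ := d.val.2.1.1
/-- The (0-indexed) position of a delay node along its chain. -/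
def posIdx (d : DelayNode m B) : ℕ := d.val.2.2.1
/-- `d` is the terminal node of its chain. -/
def isTerminal (d : DelayNode m B) : Prop := d.val.2.2 = d.val.2.1

/-- The fixed block-diagonal forward-shift matrix `C`. -/
def Cmat (m B : ℕ) : Matrix (DelayNode m B) (DelayNode m B) ℝ := fun d d' =>
  if d.val.1 = d'.val.1 ∧ d.val.2.1 = d'.val.2.1 ∧ posIdx d = posIdx d' + 1 then 1 else 0

/-- The fixed delivery matrix `J`: `J i d = 1` iff `d` is the terminal node of a
chain on an edge pointing into compute node `i`. -/
def Jmat (G : DGraph n m) (B : ℕ) : Matrix (Fin n) (DelayNode m B) ℝ := fun i d =>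
  if G.tgt (edgeOf d) = i ∧ isTerminal d then 1 else 0

/-- `L(t)`: zero-delay deliveries. -/
def Lmat (G : DGraph n m) (del : ℕ → Fin m → Fin (B + 1)) (t : ℕ) :
    Matrix (Fin n) (Fin n) ℝ := fun i j =>
  if ∃ e, G.src e = j ∧ G.tgt e = i ∧ (del t e).1 = 0 then 1 else 0

/-- `R(t)`: routing of messages into delay chains. -/
def Rmat (G : DGraph n m) (del : ℕ → Fin m → Fin (B + 1)) (t : ℕ) :
    Matrix (DelayNode m B) (Fin n) ℝ := fun d j =>
  if G.src (edgeOf d) = j ∧ posIdx d = 0 ∧ (del t (edgeOf d)).1 = lenIdx d + 1 then 1 else 0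

/-- `P̄[R(t)]`: each `1` of `R(t)` (message from `j` routed into a chain towards
`i = tgt e`) is replaced by the Push-Sum share `P i j`. -/
def PRmat (G : DGraph n m) (P : Matrix (Fin n) (Fin n) ℝ)
    (del : ℕ → Fin m → Fin (B + 1)) (t : ℕ) : Matrix (DelayNode m B) (Fin n) ℝ := fun d j =>
  Rmat G del t d j * P (G.tgt (edgeOf d)) j

/-- The Push-Sum delayed transition matrix
`P̂(t) = [[diag(P) + P∘L(t), J], [P̄[R(t)], C]]`. -/
def Phat (G : DGraph n m) (P : Matrix (Fin n) (Fin n) ℝ)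
    (del : ℕ → Fin m → Fin (B + 1)) (t : ℕ) :
    Matrix (Fin n ⊕ DelayNode m B) (Fin n ⊕ DelayNode m B) ℝ :=
  Matrix.fromBlocks
    (fun i j => (if i = j then P i j else 0) + P i j * Lmat G del t i j)
    (Jmat G B) (PRmat G P del t) (Cmat m B)

/-- Push-Sum sums: `ŝ(0) = (x(0), 0_b)`, `ŝ(t) = P̂(t)·ŝ(t−1)`. -/
def shat (G : DGraph n m) (P : Matrix (Fin n) (Fin n) ℝ)
    (del : ℕ → Fin m → Fin (B + 1)) (x0 : Fin n → ℝ) :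
    ℕ → (Fin n ⊕ DelayNode m B) → ℝ
  | 0 => Sum.elim x0 (fun _ => 0)
  | t + 1 => Phat G P del (t + 1) *ᵥ shat G P del x0 t

/-- Push-Sum weights: `ŵ(0) = (1_n, 0_b)`, `ŵ(t) = P̂(t)·ŵ(t−1)`. -/
def what (G : DGraph n m) (P : Matrix (Fin n) (Fin n) ℝ)
    (del : ℕ → Fin m → Fin (B + 1)) :
    ℕ → (Fin n ⊕ DelayNode m B) → ℝ
  | 0 => Sum.elim (fun _ => 1) (fun _ => 0)
  | t + 1 => Phat G P del (t + 1) *ᵥ what G P del t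

/-- Forward products of transposes: `Fprod r k = P̂(r)ᵀ·P̂(r+1)ᵀ⋯P̂(r+k)ᵀ`,
i.e. `F(r, r+k)` in the paper's notation. -/
def Fprod (G : DGraph n m) (P : Matrix (Fin n) (Fin n) ℝ)
    (del : ℕ → Fin m → Fin (B + 1)) (r : ℕ) :
    ℕ → Matrix (Fin n ⊕ DelayNode m B) (Fin n ⊕ DelayNode m B) ℝ
  | 0 => (Phat G P del r)ᵀ
  | k + 1 => Fprod G P del r k * (Phat G P del (r + k + 1))ᵀ

/-- The coefficient of ergodicity `τ₁(M) = (1/2)·max_{i,j} Σ_k |M_{ik} − M_{jk}|`. -/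
def tau1 {V : Type*} [Fintype V] (M : Matrix V V ℝ) : ℝ :=
  sSup {z : ℝ | ∃ i j, z = (1 / 2) * ∑ k, |M i k - M j k|}

/-- The improper coefficient of ergodicity `c(M) = 1 − max_s min_k M_{ks}`. -/
def cErg {V : Type*} [Fintype V] (M : Matrix V V ℝ) : ℝ :=
  1 - sSup {z : ℝ | ∃ s, z = sInf {y : ℝ | ∃ k, y = M k s}}

end PushSumDelay

end

/-!
Since the `P̂(t)` are nonnegative, an entry of a product of consecutive ones is positive as soon as
some trajectory of mass joins the two nodes.  A message sent along an edge of `G` has arrived after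
`B + 1` iterations, whatever its delay, and part of the mass at a compute node stays there because
`P` has a positive diagonal.  Hence in any window of `(B + 1) * D + B + 2` iterations every node of
the augmented graph sends some mass to every compute node.  A single `P̂(t)` takes only finitely
many values, so its positive entries are bounded below by some `ε > 0` independent of `t` and of the
delays, and the window products have full rows of entries at least `δ = ε ^ ((B + 1) * D + B + 2)`.

Such a row makes a column stochastic matrix contract the `ℓ¹` norm of zero-sum vectors by `1 - δ`
(Doeblin's argument).  Differences of unit vectors give the bound on `τ₁`; the zero-sum vector
`ŝ(0) - μ ŵ(0)`, with `μ` the average, gives `ŝ_i(t) - μ ŵ_i(t) → 0`, while `ŵ_i(t) ≥ δ n` once a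
window has passed.
-/

namespace PushSumDelay

section BackwardProduct

/-- The backward product `A (s + k) * ⋯ * A (s + 1)` of `k` consecutive terms of a sequence, which
carries the state at time `s` of a linear system `x (t + 1) = A (t + 1) x t` to the state at time
`s + k`. -/
def backwardProduct {M : Type*} [Monoid M] (A : ℕ → M) (s : ℕ) : ℕ → M
  | 0 => 1
  | k + 1 => A (s + k + 1) * backwardProduct A s k

variable {M : Type*} [Monoid M] (A : ℕ → M)

theorem backwardProduct_succ (s k : ℕ) :
    backwardProduct A s (k + 1) = A (s + k + 1) * backwardProduct A s k := rfl

theorem backwardProduct_one (s : ℕ) : backwardProduct A s 1 = A (s + 1) := mul_one _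

theorem backwardProduct_add (s a b : ℕ) :
    backwardProduct A s (a + b) = backwardProduct A (s + a) b * backwardProduct A s a := by
  induction b with
  | zero => exact (one_mul _).symm
  | succ b ih =>
    rw [← add_assoc, backwardProduct_succ, ih, backwardProduct_succ, mul_assoc, add_assoc s a b]

theorem backwardProduct_mem {A : ℕ → M} {S : Submonoid M} (hA : ∀ t, A t ∈ S) (s k : ℕ) :
    backwardProduct A s k ∈ S := by
  induction k with
  | zero => exact S.one_mem
  | succ k ih => exact S.mul_mem (hA _) ih

end BackwardProduct

section Contraction

variable {R V : Type*} [CommRing R] [LinearOrder R] [IsStrictOrderedRing R]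
  [Fintype V] [DecidableEq V]

/-- On zero-sum vectors, `M` acts as the nonnegative matrix obtained by subtracting `c i` from
row `i`, whose column sums are `1 - ∑ i, c i`. -/
theorem sum_abs_mulVec_le_of_forall_le {M : Matrix V V R} (hM : M ∈ colStochastic R V)
    {c : V → R} (hc : ∀ i j, c i ≤ M i j) {v : V → R} (hv : ∑ j, v j = 0) :
    ∑ i, |(M *ᵥ v) i| ≤ (1 - ∑ i, c i) * ∑ j, |v j| :=
  calc ∑ i, |(M *ᵥ v) i| = ∑ i, |∑ j, (M i j - c i) * v j| := by
        simp only [mulVec, dotProduct, sub_mul, Finset.sum_sub_distrib, ← Finset.mul_sum, hv,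
          mul_zero, sub_zero]
    _ ≤ ∑ i, ∑ j, (M i j - c i) * |v j| := by
        gcongr with i
        refine (Finset.abs_sum_le_sum_abs _ _).trans_eq (Finset.sum_congr rfl fun j _ => ?_)
        rw [abs_mul, abs_of_nonneg (sub_nonneg.2 (hc i j))]
    _ = (1 - ∑ i, c i) * ∑ j, |v j| := by
        simp only [Finset.sum_comm (s := Finset.univ (α := V)), ← Finset.sum_mul,
          Finset.sum_sub_distrib, sum_col_of_mem_colStochastic hM, ← Finset.mul_sum]

theorem sum_abs_mulVec_le {M : Matrix V V R} (hM : M ∈ colStochastic R V) {v : V → R}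
    (hv : ∑ j, v j = 0) : ∑ i, |(M *ᵥ v) i| ≤ ∑ j, |v j| := by
  simpa using sum_abs_mulVec_le_of_forall_le hM (c := 0) (fun i j => hM.1 i j) hv

theorem sum_abs_mulVec_le_of_row {M : Matrix V V R} (hM : M ∈ colStochastic R V) {i : V} {δ : R}
    (hδ : ∀ j, δ ≤ M i j) {v : V → R} (hv : ∑ j, v j = 0) :
    ∑ k, |(M *ᵥ v) k| ≤ (1 - δ) * ∑ j, |v j| := by
  have hc : ∀ k j, (Pi.single i δ : V → R) k ≤ M k j := fun k j => by
    obtain rfl | hk := eq_or_ne k i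
    · simpa using hδ j
    · simpa [hk] using hM.1 k j
  simpa using sum_abs_mulVec_le_of_forall_le hM hc hv

variable {A : ℕ → Matrix V V R} (hA : ∀ t, A t ∈ colStochastic R V) {K : ℕ} {i : V} {δ : R}
  (hδ : ∀ s j, δ ≤ backwardProduct A s K i j)

include hA hδ

theorem le_one_of_forall_le_backwardProduct : δ ≤ 1 :=
  (hδ 0 i).trans (le_one_of_mem_colStochastic (backwardProduct_mem hA 0 K))

theorem sum_abs_backwardProduct_mulVec_le {v : V → R} (hv : ∑ j, v j = 0) (t : ℕ) :
    ∑ k, |(backwardProduct A 0 t *ᵥ v) k| ≤ (1 - δ) ^ (t / K) * ∑ j, |v j| := by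
  have hδ₁ : 0 ≤ 1 - δ := sub_nonneg.2 (le_one_of_forall_le_backwardProduct hA hδ)
  have hstoch (s k : ℕ) := backwardProduct_mem hA s k
  have hsum (k : ℕ) : ∑ j, (backwardProduct A 0 k *ᵥ v) j = 0 :=
    (sum_mulVec_of_mem_colStochastic (hstoch 0 k)).trans hv
  have hblocks (q : ℕ) :
      ∑ k, |(backwardProduct A 0 (K * q) *ᵥ v) k| ≤ (1 - δ) ^ q * ∑ j, |v j| := by
    induction q with
    | zero => simp [backwardProduct]
    | succ q ih =>
      rw [Nat.mul_succ, backwardProduct_add, ← mulVec_mulVec, pow_succ', mul_assoc]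
      exact (sum_abs_mulVec_le_of_row (hstoch _ _) (hδ _) (hsum _)).trans
        (mul_le_mul_of_nonneg_left ih hδ₁)
  rw [← Nat.div_add_mod t K, backwardProduct_add, Nat.div_add_mod, ← mulVec_mulVec]
  exact (sum_abs_mulVec_le (hstoch _ _) (hsum _)).trans (hblocks _)

end Contraction

section Ergodicity

variable {V : Type*} [Fintype V]

theorem tau1_transpose_le {M : Matrix V V ℝ} {r : ℝ} (hr : 0 ≤ r)
    (hM : ∀ v : V → ℝ, ∑ j, v j = 0 → ∑ i, |(M *ᵥ v) i| ≤ r * ∑ j, |v j|) : tau1 Mᵀ ≤ r := by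
  classical
  refine Real.sSup_le ?_ hr
  rintro _ ⟨i, j, rfl⟩
  let v : V → ℝ := Pi.single i 1 - Pi.single j 1
  have hv : ∑ k, |v k| ≤ 2 :=
    calc ∑ k, |v k| ≤ ∑ k, (|(Pi.single i 1 : V → ℝ) k| + |(Pi.single j 1 : V → ℝ) k|) :=
          Finset.sum_le_sum fun k _ => abs_sub _ _
      _ = 2 := by simp [Finset.sum_add_distrib, Pi.single_apply, apply_ite abs, one_add_one_eq_two]
  have hcontr : ∑ k, |M k i - M k j| ≤ r * ∑ k, |v k| := by
    simpa [v, mulVec_sub] using hM v (by simp [v])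
  simp only [transpose_apply]
  linarith [mul_le_mul_of_nonneg_left hv hr]

variable [DecidableEq V] {A : ℕ → Matrix V V ℝ} (hA : ∀ t, A t ∈ colStochastic ℝ V) {K : ℕ}
  {i : V} {δ : ℝ} (hδ : ∀ s j, δ ≤ backwardProduct A s K i j)

include hA hδ

theorem tau1_transpose_backwardProduct_le (t : ℕ) :
    tau1 (backwardProduct A 0 t)ᵀ ≤ (1 - δ) ^ (t / K) :=
  tau1_transpose_le (pow_nonneg (sub_nonneg.2 (le_one_of_forall_le_backwardProduct hA hδ)) _)
    fun _ hv => sum_abs_backwardProduct_mulVec_le hA hδ hv t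

theorem tendsto_backwardProduct_mulVec_zero (hK : K ≠ 0) (hδ₀ : 0 < δ) {v : V → ℝ}
    (hv : ∑ j, v j = 0) (k : V) :
    Tendsto (fun t => (backwardProduct A 0 t *ᵥ v) k) atTop (nhds 0) := by
  have hpow : Tendsto (fun t => (1 - δ) ^ (t / K) * ∑ j, |v j|) atTop (nhds 0) := by
    have hδ₁ := le_one_of_forall_le_backwardProduct hA hδ
    simpa using ((tendsto_pow_atTop_nhds_zero_of_lt_one (sub_nonneg.2 hδ₁)
      (sub_lt_self 1 hδ₀)).comp (Nat.tendsto_div_const_atTop hK)).mul_const (∑ j, |v j|)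
  refine squeeze_zero_norm (fun t => ?_) hpow
  exact (Finset.single_le_sum (f := fun k => |(backwardProduct A 0 t *ᵥ v) k|)
    (fun _ _ => abs_nonneg _) (Finset.mem_univ k)).trans
      (sum_abs_backwardProduct_mulVec_le hA hδ hv t)

theorem mul_sum_le_backwardProduct_mulVec {w : V → ℝ} (hw : ∀ j, 0 ≤ w j) {t : ℕ} (ht : K ≤ t) :
    δ * ∑ j, w j ≤ (backwardProduct A 0 t *ᵥ w) i := by
  obtain ⟨a, rfl⟩ := Nat.exists_eq_add_of_le' ht
  have hstoch := backwardProduct_mem hA 0 a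
  rw [backwardProduct_add, ← mulVec_mulVec, ← sum_mulVec_of_mem_colStochastic hstoch,
    Finset.mul_sum]
  exact Finset.sum_le_sum fun j _ =>
    mul_le_mul_of_nonneg_right (hδ _ j) (nonneg_mulVec_of_mem_colStochastic hstoch hw j)

theorem tendsto_backwardProduct_mulVec_div (hK : K ≠ 0) (hδ₀ : 0 < δ) (x : V → ℝ) {w : V → ℝ}
    (hw : ∀ j, 0 ≤ w j) (hw₀ : 0 < ∑ j, w j) :
    Tendsto (fun t => (backwardProduct A 0 t *ᵥ x) i / (backwardProduct A 0 t *ᵥ w) i) atTop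
      (nhds ((∑ j, x j) / ∑ j, w j)) := by
  set μ := (∑ j, x j) / ∑ j, w j with hμ
  have hv : ∑ j, (x - μ • w) j = 0 := by
    simp [Finset.sum_sub_distrib, ← Finset.mul_sum, hμ, hw₀.ne']
  have hweight : ∀ᶠ t in atTop, δ * ∑ j, w j ≤ (backwardProduct A 0 t *ᵥ w) i :=
    (eventually_ge_atTop K).mono fun t => mul_sum_le_backwardProduct_mulVec hA hδ hw
  have hδw : 0 < δ * ∑ j, w j := mul_pos hδ₀ hw₀
  have herr := tendsto_backwardProduct_mulVec_zero hA hδ hK hδ₀ hv i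
  rw [tendsto_iff_norm_sub_tendsto_zero]
  refine squeeze_zero' (Eventually.of_forall fun t => norm_nonneg _) ?_
    (by simpa using herr.norm.div_const (δ * ∑ j, w j))
  filter_upwards [hweight] with t ht
  rw [div_sub' (hδw.trans_le ht).ne', norm_div, Real.norm_of_nonneg (hδw.le.trans ht),
    mulVec_sub, mulVec_smul, Pi.sub_apply, Pi.smul_apply, smul_eq_mul, mul_comm _ μ]
  exact div_le_div_of_nonneg_left (norm_nonneg _) hδw ht

end Ergodicity

section PositiveEntries

variable {R V : Type*} [Semiring R] [LinearOrder R] [IsStrictOrderedRing R] [Fintype V]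

theorem mul_apply_pos_iff {M N : Matrix V V R} (hM : ∀ i j, 0 ≤ M i j) (hN : ∀ i j, 0 ≤ N i j)
    {i k : V} : 0 < (M * N) i k ↔ ∃ j, 0 < M i j ∧ 0 < N j k := by
  rw [mul_apply, Finset.sum_pos_iff_of_nonneg fun j _ => mul_nonneg (hM i j) (hN j k)]
  simp only [Finset.mem_univ, true_and]
  refine exists_congr fun j => ⟨fun h => ?_, fun h => mul_pos h.1 h.2⟩
  exact ⟨pos_of_mul_pos_left h (hN j k), pos_of_mul_pos_right h (hM i j)⟩

theorem le_mul_apply_of_pos {M N : Matrix V V R} (hM : ∀ i j, 0 ≤ M i j) (hN : ∀ i j, 0 ≤ N i j)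
    {a b : R} (hb : 0 ≤ b) (hMa : ∀ i j, 0 < M i j → a ≤ M i j)
    (hNb : ∀ i j, 0 < N i j → b ≤ N i j) {i k : V} (h : 0 < (M * N) i k) :
    a * b ≤ (M * N) i k := by
  obtain ⟨j, hMj, hNj⟩ := (mul_apply_pos_iff hM hN).1 h
  exact (mul_le_mul (hMa i j hMj) (hNb j k hNj) hb hMj.le).trans
    (Finset.single_le_sum (f := fun j => M i j * N j k)
      (fun j _ => mul_nonneg (hM i j) (hN j k)) (Finset.mem_univ j))

variable [DecidableEq V] {A : ℕ → Matrix V V R} (hA : ∀ t i j, 0 ≤ A t i j)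

include hA

theorem backwardProduct_apply_nonneg (s k : ℕ) (i j : V) : 0 ≤ backwardProduct A s k i j := by
  induction k generalizing i j with
  | zero => exact zero_le_one_elem i j
  | succ k ih => exact Finset.sum_nonneg fun l _ => mul_nonneg (hA _ i l) (ih l j)

theorem backwardProduct_apply_pos_trans {s a b : ℕ} {i j k : V}
    (hij : 0 < backwardProduct A s a j i) (hjk : 0 < backwardProduct A (s + a) b k j) :
    0 < backwardProduct A s (a + b) k i := by
  rw [backwardProduct_add]
  exact (mul_apply_pos_iff (backwardProduct_apply_nonneg hA _ _)
    (backwardProduct_apply_nonneg hA _ _)).2 ⟨j, hjk, hij⟩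

theorem pow_le_backwardProduct_apply_of_pos {ε : R} (hε : 0 ≤ ε)
    (hAε : ∀ t i j, 0 < A t i j → ε ≤ A t i j) (s k : ℕ) (i j : V)
    (h : 0 < backwardProduct A s k i j) : ε ^ k ≤ backwardProduct A s k i j := by
  induction k generalizing i j with
  | zero =>
    obtain rfl | hij := eq_or_ne i j
    · simp [backwardProduct]
    · simp [backwardProduct, hij] at h
  | succ k ih =>
    rw [pow_succ']
    exact le_mul_apply_of_pos (hA _) (backwardProduct_apply_nonneg hA s k) (pow_nonneg hε k)
      (hAε _) ih h

end PositiveEntries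

theorem exists_pos_forall_le_of_pos {ι : Type*} [Finite ι] (f : ι → ℝ) :
    ∃ ε > 0, ∀ i, 0 < f i → ε ≤ f i := by
  have hsmall : ∀ᶠ ε in nhdsWithin (0 : ℝ) (Set.Ioi 0), ∀ i, 0 < f i → ε ≤ f i := by
    refine eventually_all.2 fun i => eventually_imp_distrib_left.2 fun hi => ?_
    exact mem_of_superset (Ioc_mem_nhdsGT hi) fun ε hε => hε.2
  have hpos : ∀ᶠ ε in nhdsWithin (0 : ℝ) (Set.Ioi 0), 0 < ε := self_mem_nhdsWithin
  exact (hpos.and hsmall).exists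

section TransitionMatrix

variable {n m B : ℕ} {G : DGraph n m} {P : Matrix (Fin n) (Fin n) ℝ}

/-- The first node of the chain of length `ℓ + 1` on the edge `e`. -/
def chainEntry (e : Fin m) (ℓ : Fin B) : DelayNode m B :=
  ⟨(e, ℓ, ⟨0, ℓ.pos⟩), Nat.zero_le _⟩

theorem posIdx_lt_lenIdx {d : DelayNode m B} (hd : ¬ isTerminal d) : posIdx d < lenIdx d :=
  lt_of_le_of_ne d.2 fun h => hd (Fin.ext h)

/-- The successor of a non-terminal node along its chain. -/
def nextNode (d : DelayNode m B) (hd : ¬ isTerminal d) : DelayNode m B :=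
  ⟨(edgeOf d, d.val.2.1, ⟨posIdx d + 1, lt_of_le_of_lt (posIdx_lt_lenIdx hd) d.val.2.1.2⟩),
    posIdx_lt_lenIdx hd⟩

theorem Cmat_of_isTerminal {d : DelayNode m B} (hd : isTerminal d) (d' : DelayNode m B) :
    Cmat m B d' d = 0 := by
  refine if_neg ?_
  rintro ⟨-, hlen, hpos⟩
  have hd' : posIdx d' ≤ lenIdx d' := d'.2
  have hlen' : lenIdx d' = lenIdx d := congrArg Fin.val hlen
  have hd₀ : posIdx d = lenIdx d := congrArg Fin.val hd
  omega

theorem Cmat_of_not_isTerminal {d : DelayNode m B} (hd : ¬ isTerminal d) (d' : DelayNode m B) :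
    Cmat m B d' d = if d' = nextNode d hd then 1 else 0 := by
  refine if_congr ⟨fun ⟨he, hlen, hpos⟩ => ?_, ?_⟩ rfl rfl
  · exact Subtype.ext (Prod.ext he (Prod.ext hlen (Fin.ext hpos)))
  · rintro rfl
    exact ⟨rfl, rfl, rfl⟩

theorem sum_Jmat_add_sum_Cmat (G : DGraph n m) (d : DelayNode m B) :
    ∑ i, Jmat G B i d + ∑ d', Cmat m B d' d = 1 := by
  by_cases hd : isTerminal d
  · simp [Jmat, hd, Cmat_of_isTerminal]
  · simp [Jmat, hd, Cmat_of_not_isTerminal]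

theorem Lmat_tgt_src (hV : G.ValidCol P) (del : ℕ → Fin m → Fin (B + 1)) (t : ℕ) (e : Fin m) :
    Lmat G del t (G.tgt e) (G.src e) = if del t e = 0 then 1 else 0 := by
  refine if_congr ⟨?_, fun h => ⟨e, rfl, rfl, congrArg Fin.val h⟩⟩ rfl rfl
  rintro ⟨e', hsrc, htgt, hdel⟩
  obtain rfl := hV.edgeInj _ _ hsrc htgt
  exact Fin.ext hdel

theorem Rmat_apply_of_tgt_eq (hV : G.ValidCol P) (del : ℕ → Fin m → Fin (B + 1)) (t : ℕ)
    {d : DelayNode m B} {e : Fin m} (htgt : G.tgt (edgeOf d) = G.tgt e) :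
    Rmat G del t d (G.src e) =
      if ∃ ℓ : Fin B, del t e = ℓ.succ ∧ d = chainEntry e ℓ then 1 else 0 := by
  refine if_congr ⟨?_, ?_⟩ rfl rfl
  · rintro ⟨hsrc, hpos, hdel⟩
    obtain rfl := hV.edgeInj _ _ hsrc htgt
    exact ⟨d.val.2.1, Fin.ext hdel, Subtype.ext (Prod.ext rfl (Prod.ext rfl (Fin.ext hpos)))⟩
  · rintro ⟨ℓ, hdel, rfl⟩
    exact ⟨rfl, rfl, congrArg Fin.val hdel⟩

theorem Lmat_add_sum_Rmat (hV : G.ValidCol P) (del : ℕ → Fin m → Fin (B + 1)) (t : ℕ)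
    (i j : Fin n) :
    Lmat G del t i j + ∑ d with G.tgt (edgeOf d) = i, Rmat G del t d j =
      if G.adj j i then 1 else 0 := by
  split_ifs with hadj
  · obtain ⟨e, rfl, rfl⟩ := hadj
    rw [Lmat_tgt_src hV, Finset.sum_congr rfl fun d hd =>
      Rmat_apply_of_tgt_eq hV del t (Finset.mem_filter.1 hd).2]
    obtain hdel | ⟨ℓ, hdel⟩ := Fin.eq_zero_or_eq_succ (del t e)
    · simp [hdel, (Fin.succ_ne_zero _).symm]
    · have htgt : G.tgt (edgeOf (chainEntry e ℓ)) = G.tgt e := rfl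
      simp [hdel, Fin.succ_inj, Finset.sum_ite_eq', htgt]
  · have hL : Lmat G del t i j = 0 := if_neg fun ⟨e, hsrc, htgt, _⟩ => hadj ⟨e, hsrc, htgt⟩
    have hR : ∀ d ∈ Finset.univ.filter fun d : DelayNode m B => G.tgt (edgeOf d) = i,
        Rmat G del t d j = 0 := fun d hd =>
      if_neg fun ⟨hsrc, _⟩ => hadj ⟨edgeOf d, hsrc, (Finset.mem_filter.1 hd).2⟩
    rw [hL, Finset.sum_eq_zero hR, add_zero]

theorem diag_add_mul_adj (hV : G.ValidCol P) (i j : Fin n) :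
    (if i = j then P i j else 0) + P i j * (if G.adj j i then 1 else 0) = P i j := by
  obtain rfl | hij := eq_or_ne i j
  · have hself : ¬ G.adj i i := fun ⟨e, hsrc, htgt⟩ => hV.noSelf e (hsrc.trans htgt.symm)
    simp [hself]
  · by_cases hadj : G.adj j i
    · simp [hij, hadj]
    · have hP : P i j = 0 := le_antisymm
        (not_lt.1 fun h => ((hV.support i j).1 h).elim hij hadj) (hV.nonneg i j)
      simp [hP]

theorem sum_PRmat (G : DGraph n m) (P : Matrix (Fin n) (Fin n) ℝ)
    (del : ℕ → Fin m → Fin (B + 1)) (t : ℕ) (j : Fin n) :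
    ∑ d, PRmat G P del t d j =
      ∑ i, P i j * ∑ d with G.tgt (edgeOf d) = i, Rmat G del t d j := by
  rw [← Finset.sum_fiberwise Finset.univ fun d => G.tgt (edgeOf d)]
  refine Finset.sum_congr rfl fun i _ => ?_
  rw [Finset.mul_sum]
  refine Finset.sum_congr rfl fun d hd => ?_
  rw [PRmat, (Finset.mem_filter.1 hd).2, mul_comm]

section Blocks

variable (G P) (del : ℕ → Fin m → Fin (B + 1)) (t : ℕ)

theorem Phat_inl_inl (i j : Fin n) : Phat G P del t (Sum.inl i) (Sum.inl j) =
    (if i = j then P i j else 0) + P i j * Lmat G del t i j := rfl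

theorem Phat_inl_inr (i : Fin n) (d : DelayNode m B) :
    Phat G P del t (Sum.inl i) (Sum.inr d) = Jmat G B i d := rfl

theorem Phat_inr_inl (d : DelayNode m B) (j : Fin n) :
    Phat G P del t (Sum.inr d) (Sum.inl j) = PRmat G P del t d j := rfl

theorem Phat_inr_inr (d d' : DelayNode m B) :
    Phat G P del t (Sum.inr d) (Sum.inr d') = Cmat m B d d' := rfl

end Blocks

theorem Phat_nonneg (hP : ∀ i j, 0 ≤ P i j) (del : ℕ → Fin m → Fin (B + 1)) (t : ℕ)
    (u v : Fin n ⊕ DelayNode m B) : 0 ≤ Phat G P del t u v := by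
  rcases u with i | d <;> rcases v with j | d'
  · have := hP i j
    rw [Phat_inl_inl, Lmat]
    positivity
  · rw [Phat_inl_inr, Jmat]
    positivity
  · have := hP (G.tgt (edgeOf d)) j
    rw [Phat_inr_inl, PRmat, Rmat]
    positivity
  · rw [Phat_inr_inr, Cmat]
    positivity

theorem Phat_mem_colStochastic (hV : G.ValidCol P) (del : ℕ → Fin m → Fin (B + 1)) (t : ℕ) :
    Phat G P del t ∈ colStochastic ℝ (Fin n ⊕ DelayNode m B) := by
  refine mem_colStochastic_iff_sum.2 ⟨Phat_nonneg hV.nonneg del t, ?_⟩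
  rintro (j | d) <;> rw [Fintype.sum_sum_type]
  · simp only [Phat_inl_inl, Phat_inr_inl, sum_PRmat, ← Finset.sum_add_distrib, add_assoc,
      ← mul_add, Lmat_add_sum_Rmat hV, diag_add_mul_adj hV, hV.colSum]
  · exact sum_Jmat_add_sum_Cmat G d

/-- `P̂(t)` depends on `t` and on the delays only through the delays drawn at time `t`, which take
finitely many values. -/
theorem exists_pos_forall_le_Phat (B : ℕ) (G : DGraph n m) (P : Matrix (Fin n) (Fin n) ℝ) :
    ∃ ε > 0, ∀ (del : ℕ → Fin m → Fin (B + 1)) t u v,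
      0 < Phat G P del t u v → ε ≤ Phat G P del t u v := by
  obtain ⟨ε, hε₀, hε⟩ := exists_pos_forall_le_of_pos
    fun q : (Fin m → Fin (B + 1)) × (Fin n ⊕ DelayNode m B) × (Fin n ⊕ DelayNode m B) =>
      Phat G P (fun _ => q.1) 0 q.2.1 q.2.2
  exact ⟨ε, hε₀, fun del t u v => hε (del t, u, v)⟩

end TransitionMatrix

section Reachability

variable {n m B : ℕ} {G : DGraph n m} {P : Matrix (Fin n) (Fin n) ℝ} (hV : G.ValidCol P)
  (del : ℕ → Fin m → Fin (B + 1))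

theorem Phat_nextNode (G : DGraph n m) (P : Matrix (Fin n) (Fin n) ℝ) (t : ℕ)
    {d : DelayNode m B} (hd : ¬ isTerminal d) :
    Phat G P del t (Sum.inr (nextNode d hd)) (Sum.inr d) = 1 := by
  rw [Phat_inr_inr, Cmat_of_not_isTerminal hd, if_pos rfl]

theorem Phat_tgt_of_isTerminal (G : DGraph n m) (P : Matrix (Fin n) (Fin n) ℝ) (t : ℕ)
    {d : DelayNode m B} (hd : isTerminal d) :
    Phat G P del t (Sum.inl (G.tgt (edgeOf d))) (Sum.inr d) = 1 := by
  simp [Phat_inl_inr, Jmat, hd]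

include hV

theorem Phat_self_pos (t : ℕ) (i : Fin n) : 0 < Phat G P del t (Sum.inl i) (Sum.inl i) := by
  have hP : 0 < P i i := (hV.support i i).2 (Or.inl rfl)
  rw [Phat_inl_inl, if_pos rfl, Lmat]
  positivity

theorem Phat_tgt_src_pos {t : ℕ} {e : Fin m} (hdel : del t e = 0) :
    0 < Phat G P del t (Sum.inl (G.tgt e)) (Sum.inl (G.src e)) := by
  have hP : 0 < P (G.tgt e) (G.src e) := (hV.support _ _).2 (Or.inr ⟨e, rfl, rfl⟩)
  simpa [Phat_inl_inl, Lmat_tgt_src hV, hdel, (hV.noSelf e).symm] using hP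

theorem Phat_chainEntry_src_pos {t : ℕ} {e : Fin m} {ℓ : Fin B} (hdel : del t e = ℓ.succ) :
    0 < Phat G P del t (Sum.inr (chainEntry e ℓ)) (Sum.inl (G.src e)) := by
  have hP : 0 < P (G.tgt e) (G.src e) := (hV.support _ _).2 (Or.inr ⟨e, rfl, rfl⟩)
  have hR : Rmat G del t (chainEntry e ℓ) (G.src e) = 1 :=
    (Rmat_apply_of_tgt_eq hV del t rfl).trans (if_pos ⟨ℓ, hdel, rfl⟩)
  rw [Phat_inr_inl, PRmat, hR, one_mul]
  exact hP

theorem backwardProduct_Phat_trans {s a b : ℕ} {u v w : Fin n ⊕ DelayNode m B}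
    (huv : 0 < backwardProduct (Phat G P del) s a v u)
    (hvw : 0 < backwardProduct (Phat G P del) (s + a) b w v) :
    0 < backwardProduct (Phat G P del) s (a + b) w u :=
  backwardProduct_apply_pos_trans (Phat_nonneg hV.nonneg del) huv hvw

theorem backwardProduct_Phat_self_pos (s k : ℕ) (i : Fin n) :
    0 < backwardProduct (Phat G P del) s k (Sum.inl i) (Sum.inl i) := by
  induction k with
  | zero => simp [backwardProduct]
  | succ k ih =>
    refine backwardProduct_Phat_trans hV del ih ?_
    rw [backwardProduct_one]
    exact Phat_self_pos hV del _ i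

theorem backwardProduct_Phat_pos_of_le {s a b : ℕ} (hab : a ≤ b) {i : Fin n}
    {u : Fin n ⊕ DelayNode m B} (h : 0 < backwardProduct (Phat G P del) s a (Sum.inl i) u) :
    0 < backwardProduct (Phat G P del) s b (Sum.inl i) u := by
  obtain ⟨c, rfl⟩ := Nat.exists_eq_add_of_le hab
  exact backwardProduct_Phat_trans hV del h (backwardProduct_Phat_self_pos hV del _ c i)

theorem backwardProduct_Phat_tgt_pos (s r : ℕ) {d : DelayNode m B} (hr : lenIdx d = posIdx d + r) :
    0 < backwardProduct (Phat G P del) s (r + 1) (Sum.inl (G.tgt (edgeOf d))) (Sum.inr d) := by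
  induction r generalizing s d with
  | zero =>
    rw [zero_add, backwardProduct_one, Phat_tgt_of_isTerminal _ _ _ _ (Fin.ext hr.symm)]
    exact one_pos
  | succ r ih =>
    have hd : ¬ isTerminal d := fun h => by
      have : posIdx d = lenIdx d := congrArg Fin.val h
      omega
    have hstep : 0 < backwardProduct (Phat G P del) s 1 (Sum.inr (nextNode d hd)) (Sum.inr d) := by
      rw [backwardProduct_one, Phat_nextNode]
      exact one_pos
    have hnext : lenIdx (nextNode d hd) = posIdx (nextNode d hd) + r :=
      hr.trans (add_right_comm (posIdx d) r 1)
    rw [add_comm (r + 1) 1]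
    exact backwardProduct_Phat_trans hV del hstep (ih (s + 1) hnext)

theorem backwardProduct_Phat_tgt_src_pos (s : ℕ) (e : Fin m) :
    0 < backwardProduct (Phat G P del) s (B + 1) (Sum.inl (G.tgt e)) (Sum.inl (G.src e)) := by
  obtain hdel | ⟨ℓ, hdel⟩ := Fin.eq_zero_or_eq_succ (del (s + 1) e)
  · refine backwardProduct_Phat_pos_of_le hV del (Nat.le_add_left 1 B) ?_
    rw [backwardProduct_one]
    exact Phat_tgt_src_pos hV del hdel
  · have hsend : 0 < backwardProduct (Phat G P del) s 1 (Sum.inr (chainEntry e ℓ))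
        (Sum.inl (G.src e)) := by
      rw [backwardProduct_one]
      exact Phat_chainEntry_src_pos hV del hdel
    have hdeliver := backwardProduct_Phat_tgt_pos hV del (s + 1) ℓ (d := chainEntry e ℓ)
      (zero_add _).symm
    exact backwardProduct_Phat_pos_of_le hV del (by omega)
      (backwardProduct_Phat_trans hV del hsend hdeliver)

theorem backwardProduct_Phat_getLast_pos {l : List (Fin n)} {x : Fin n}
    (hl : List.IsChain G.adj (x :: l)) (s : ℕ) :
    0 < backwardProduct (Phat G P del) s ((B + 1) * l.length)
      (Sum.inl ((x :: l).getLast (List.cons_ne_nil x l))) (Sum.inl x) := by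
  induction l generalizing s x with
  | nil => simp [backwardProduct]
  | cons y l ih =>
    obtain ⟨⟨e, rfl, rfl⟩, htail⟩ := List.isChain_cons_cons.1 hl
    rw [List.length_cons, Nat.mul_succ, add_comm, List.getLast_cons (List.cons_ne_nil _ _)]
    exact backwardProduct_Phat_trans hV del (backwardProduct_Phat_tgt_src_pos hV del s e)
      (ih htail _)

theorem backwardProduct_Phat_pos_of_reachWithin {k : ℕ} {x y : Fin n}
    (hxy : ReachWithin G.adj k x y) (s : ℕ) :
    0 < backwardProduct (Phat G P del) s ((B + 1) * k) (Sum.inl y) (Sum.inl x) := by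
  obtain ⟨l, hlk, hl, rfl⟩ := hxy
  exact backwardProduct_Phat_pos_of_le hV del (Nat.mul_le_mul_left _ hlk)
    (backwardProduct_Phat_getLast_pos hV del hl s)

theorem backwardProduct_Phat_window_pos {D : ℕ} (hD : ∀ x y, ReachWithin G.adj D x y) (s : ℕ)
    (i : Fin n) (u : Fin n ⊕ DelayNode m B) :
    0 < backwardProduct (Phat G P del) s ((B + 1) * D + B + 1 + 1) (Sum.inl i) u := by
  rcases u with j | d
  · exact backwardProduct_Phat_pos_of_le hV del (by omega)
      (backwardProduct_Phat_pos_of_reachWithin hV del (hD j i) s)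
  · obtain ⟨r, hr⟩ := Nat.exists_eq_add_of_le (show posIdx d ≤ lenIdx d from d.2)
    have hlen : lenIdx d < B := d.val.2.1.2
    refine backwardProduct_Phat_pos_of_le hV del (a := r + 1 + (B + 1) * D) (by omega) ?_
    exact backwardProduct_Phat_trans hV del (backwardProduct_Phat_tgt_pos hV del s r hr)
      (backwardProduct_Phat_pos_of_reachWithin hV del (hD _ i) _)

theorem exists_pos_forall_le_backwardProduct_Phat {D : ℕ}
    (hD : ∀ x y, ReachWithin G.adj D x y) :
    ∃ δ > 0, ∀ (del : ℕ → Fin m → Fin (B + 1)) i s u,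
      δ ≤ backwardProduct (Phat G P del) s ((B + 1) * D + B + 1 + 1) (Sum.inl i) u := by
  obtain ⟨ε, hε₀, hε⟩ := exists_pos_forall_le_Phat B G P
  exact ⟨ε ^ ((B + 1) * D + B + 1 + 1), pow_pos hε₀ _, fun del i s u =>
    pow_le_backwardProduct_apply_of_pos (Phat_nonneg hV.nonneg del) hε₀.le (hε del) _ _ _ _
      (backwardProduct_Phat_window_pos hV del hD s i u)⟩

end Reachability

section Iterates

variable {n m B : ℕ} (G : DGraph n m) (P : Matrix (Fin n) (Fin n) ℝ)
  (del : ℕ → Fin m → Fin (B + 1))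

theorem shat_eq_backwardProduct_mulVec (x0 : Fin n → ℝ) (t : ℕ) :
    shat G P del x0 t = backwardProduct (Phat G P del) 0 t *ᵥ Sum.elim x0 fun _ => 0 := by
  induction t with
  | zero => exact (one_mulVec _).symm
  | succ t ih => rw [shat, ih, backwardProduct_succ, mulVec_mulVec, zero_add]

theorem what_eq_shat_one (t : ℕ) : what G P del t = shat G P del (fun _ => 1) t := by
  induction t with
  | zero => rfl
  | succ t ih => rw [what, ih, shat]

theorem Fprod_one_eq_transpose (k : ℕ) :
    Fprod G P del 1 k = (backwardProduct (Phat G P del) 0 (k + 1))ᵀ := by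
  induction k with
  | zero => rw [backwardProduct_one]; rfl
  | succ k ih =>
    rw [Fprod, ih, ← transpose_mul, backwardProduct_succ _ _ (k + 1), zero_add, add_comm 1 k]

variable {G P}

theorem tendsto_shat_div_what (hV : G.ValidCol P) {K : ℕ} (hK : K ≠ 0) {δ : ℝ} (hδ₀ : 0 < δ)
    {i : Fin n} (hδ : ∀ s u, δ ≤ backwardProduct (Phat G P del) s K (Sum.inl i) u)
    (x0 : Fin n → ℝ) :
    Tendsto (fun t => shat G P del x0 t (Sum.inl i) / what G P del t (Sum.inl i)) atTop
      (nhds ((∑ j, x0 j) / n)) := by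
  have hn : 0 < n := i.pos
  simpa [what_eq_shat_one, shat_eq_backwardProduct_mulVec] using
    tendsto_backwardProduct_mulVec_div (Phat_mem_colStochastic hV del) hδ hK hδ₀
      (Sum.elim x0 fun _ => 0) (w := Sum.elim (fun _ => 1) fun _ => 0) (by simp) (by simpa)

end Iterates

end PushSumDelay

open PushSumDelay Filter in
/-- **Push-Sum with bounded time-varying delays achieves average consensus at a
geometric rate.**  For every realization of the delays and every initial vector,
each compute node's ratio `ŝ_i(t)/ŵ_i(t)` converges to the average
`(1/n)·∑ j, x_j(0)`; moreover there is a `c₀ ∈ [0,1)`, depending only on `G`, `P`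
and `B` (not on the realization), such that with `D̂ = (B+1)·D + B + 1` the forward
products `F(1,t) = P̂(1)ᵀ⋯P̂(t)ᵀ` satisfy `τ₁(F(1,t)) ≤ c₀ ^ ⌊t/(D̂+1)⌋`. -/
theorem pushSum_random_delay_average_consensus_geometric
    {n m B D : ℕ} (hn : 0 < n) (hB : 1 ≤ B)
    (G : DGraph n m) (P : Matrix (Fin n) (Fin n) ℝ) (hV : G.ValidCol P)
    (hD : IsDiameter G.adj D) :
    ∃ c₀ : ℝ, 0 ≤ c₀ ∧ c₀ < 1 ∧
      ∀ (del : ℕ → Fin m → Fin (B + 1)) (x0 : Fin n → ℝ),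
        (∀ i : Fin n,
          Tendsto
            (fun t => shat G P del x0 t (Sum.inl i) / what G P del t (Sum.inl i))
            atTop (nhds ((∑ j, x0 j) / n))) ∧
        (∀ t : ℕ, 1 ≤ t →
          tau1 (Fprod G P del 1 (t - 1)) ≤
            c₀ ^ (t / ((B + 1) * D + B + 1 + 1))) := by
  obtain ⟨δ, hδ₀, hδ⟩ := exists_pos_forall_le_backwardProduct_Phat (B := B) hV hD.1
  have hδ₁ : δ ≤ 1 := le_one_of_forall_le_backwardProduct
    (Phat_mem_colStochastic hV fun _ _ => 0) (hδ (fun _ _ => 0) ⟨0, hn⟩)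
  refine ⟨1 - δ, sub_nonneg.2 hδ₁, sub_lt_self 1 hδ₀, fun del x0 => ⟨fun i => ?_, fun t ht => ?_⟩⟩
  · exact tendsto_shat_div_what del hV (Nat.succ_ne_zero _) hδ₀ (hδ del i) x0
  · rw [Fprod_one_eq_transpose, Nat.sub_add_cancel ht]
    exact tau1_transpose_backwardProduct_le (Phat_mem_colStochastic hV del) (hδ del ⟨0, hn⟩) t
end

section
/- Assume P is doubly stochastic. Let q_r = P_{j(r)i(r)} be the weight that node j(r) assigns to messages from node i(r), and set S = n + Σ_{r=1}^m b_r·q_r. Define π̂ ∈ ℝ^{n+b} by π̂_i = 1/S for every compute node i and π̂_{d_k^r} = q_r/S for every delay node d_k^r on the chain replacing edge r. Then π̂ is a probability vector (its entries are nonnegative and sum to 1) and it is a stationary distribution of the delayed protocol: π̂ᵀ·P̂ = π̂ᵀ. -/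
open Matrix Filter BigOperators
open scoped Classical

noncomputable section

/-- Graph hypotheses: no self-loops, distinct edges, `P` row stochastic respecting
`G` (hence with positive diagonal), `G` strongly connected. -/
structure DGraph.Valid {n m : ℕ} (G : DGraph n m) (P : Matrix (Fin n) (Fin n) ℝ) : Prop where
  noSelf : ∀ e, G.src e ≠ G.tgt e
  edgeInj : ∀ e e', G.src e = G.src e' → G.tgt e = G.tgt e' → e = e'
  nonneg : ∀ i j, 0 ≤ P i j
  rowSum : ∀ i, ∑ j, P i j = 1
  support : ∀ i j, 0 < P i j ↔ i = j ∨ ∃ e, G.src e = j ∧ G.tgt e = i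
  connected : ∀ i j : Fin n,
    Relation.ReflTransGen (fun a b => ∃ e, G.src e = a ∧ G.tgt e = b) i j

/-- The delay nodes of the fixed-delay augmentation: for edge `r` with delay
`bvec r`, the chain positions `0, …, bvec r − 1` (position `k` is the node
`d_{k+1}^r` of the paper). -/
def FDelayNode (m : ℕ) (bvec : Fin m → ℕ) : Type := Σ r : Fin m, Fin (bvec r)

instance (m : ℕ) (bvec : Fin m → ℕ) : Fintype (FDelayNode m bvec) := by
  unfold FDelayNode; infer_instance

instance (m : ℕ) (bvec : Fin m → ℕ) : DecidableEq (FDelayNode m bvec) := by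
  unfold FDelayNode; infer_instance

/-- The node set of the augmented graph `Ĝ`: `n` compute nodes plus
`b = ∑ r, bvec r` delay nodes. -/
abbrev FNode (n m : ℕ) (bvec : Fin m → ℕ) : Type := Fin n ⊕ FDelayNode m bvec

/-- The fixed-delay augmented protocol `P̂` on `Ĝ`:
`P̂_{ij} = P_{ij}` for compute nodes with `i = j` or `(j,i)` an edge of zero delay;
`P̂_{d_1^r, i(r)} = 1`; `P̂_{d_k^r, d_{k-1}^r} = 1`; `P̂_{j(r), d_{b_r}^r} = P_{j(r) i(r)}`
for every edge `r` with `bvec r ≥ 1`; all other entries `0`. -/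
def PhatFixed {n m : ℕ} (G : DGraph n m) (P : Matrix (Fin n) (Fin n) ℝ)
    (bvec : Fin m → ℕ) : Matrix (FNode n m bvec) (FNode n m bvec) ℝ := fun u v =>
  match u, v with
  | Sum.inl i, Sum.inl j =>
      if i = j ∨ ∃ r, G.src r = j ∧ G.tgt r = i ∧ bvec r = 0 then P i j else 0
  | Sum.inl i, Sum.inr d =>
      if G.tgt d.1 = i ∧ (d.2 : ℕ) + 1 = bvec d.1 then P i (G.src d.1) else 0
  | Sum.inr d, Sum.inl j =>
      if G.src d.1 = j ∧ (d.2 : ℕ) = 0 then 1 else 0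
  | Sum.inr d, Sum.inr d' =>
      if d.1 = d'.1 ∧ (d.2 : ℕ) = (d'.2 : ℕ) + 1 then 1 else 0

end

/-!
Read a row vector `x` as mass which `x ↦ x ᵥ* P` moves against the edges: edge `r` takes
`x (tgt r) * P (tgt r) (src r)` from `tgt r` to `src r`. Delays only reroute this mass through the
chain of `r`, so if `x` is stationary and each delay node of `r` already holds exactly that amount,
one step of the delayed protocol shifts equal amounts along every chain and changes nothing. For
doubly stochastic `P` the all-ones vector is stationary; dividing its lift by the total mass `S`
gives the distribution.
-/

/-- A graph is simple if it has no self-loops and at most one edge between any ordered pair of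
nodes. -/
structure DGraph.IsSimple {n m : ℕ} (G : DGraph n m) : Prop where
  src_ne_tgt : ∀ r, G.src r ≠ G.tgt r
  injective_src_tgt : Function.Injective fun r => (G.src r, G.tgt r)

/-- A matrix respects `G` if its off-diagonal support lies on the edges of `G`; the row index is
the receiving node, so edge `r` carries the entry at `(tgt r, src r)`. -/
def DGraph.Supports {n m : ℕ} (G : DGraph n m) (P : Matrix (Fin n) (Fin n) ℝ) : Prop :=
  ∀ i j, P i j ≠ 0 → i = j ∨ ∃ r, G.src r = j ∧ G.tgt r = i

/-- The extension of a row vector from the compute nodes to the augmented graph: every delay node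
of edge `r` holds the mass `x (tgt r) * P (tgt r) (src r)` that leaves `tgt r` for `src r` in one
step of `x ↦ x ᵥ* P`. -/
noncomputable def delayLift {n m : ℕ} (G : DGraph n m) (P : Matrix (Fin n) (Fin n) ℝ)
    (bvec : Fin m → ℕ) (x : Fin n → ℝ) : FNode n m bvec → ℝ :=
  Sum.elim x fun d => x (G.tgt d.1) * P (G.tgt d.1) (G.src d.1)

theorem vecMul_single_eq_pi_single {ι κ R : Type*} [Fintype ι] [DecidableEq ι] [DecidableEq κ]
    [NonUnitalNonAssocSemiring R] (x : ι → R) (i : ι) (j : κ) (c : R) :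
    x ᵥ* Matrix.single i j c = Pi.single j (x i * c) := by
  ext j'
  by_cases hj : j = j'
  · simp [vecMul, dotProduct, Matrix.single_apply, hj]
  · simp [vecMul, dotProduct, hj, Ne.symm hj]

section DelayLift

variable {n m : ℕ} {G : DGraph n m} {P : Matrix (Fin n) (Fin n) ℝ} {bvec : Fin m → ℕ}
  {x : Fin n → ℝ}

theorem DGraph.Valid.isSimple (hV : G.Valid P) : G.IsSimple where
  src_ne_tgt := hV.noSelf
  injective_src_tgt e e' h := hV.edgeInj e e' (congrArg Prod.fst h) (congrArg Prod.snd h)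

theorem DGraph.Valid.supports (hV : G.Valid P) : G.Supports P := fun i j hij =>
  (hV.support i j).1 ((hV.nonneg i j).lt_of_ne' hij)

theorem FDelayNode.sum_eq {M : Type*} [AddCommMonoid M] (f : FDelayNode m bvec → M) :
    ∑ d, f d = ∑ r, ∑ k : Fin (bvec r), f ⟨r, k⟩ :=
  Fintype.sum_sigma (α := fun r => Fin (bvec r)) f

theorem FDelayNode.ext_iff {d d' : FDelayNode m bvec} :
    d = d' ↔ d.1 = d'.1 ∧ (d.2 : ℕ) = d'.2 := by
  refine ⟨fun h => h ▸ ⟨rfl, rfl⟩, fun ⟨hedge, hpos⟩ => Sigma.ext hedge ?_⟩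
  exact (Fin.heq_ext_iff (congrArg bvec hedge)).2 hpos

theorem delayLift_nonneg (hP : ∀ i j, 0 ≤ P i j) (hx : 0 ≤ x) : 0 ≤ delayLift G P bvec x := by
  rintro (i | d)
  · exact hx i
  · exact mul_nonneg (hx _) (hP _ _)

theorem sum_delayLift :
    ∑ u, delayLift G P bvec x u =
      ∑ i, x i + ∑ r, (bvec r : ℝ) * (x (G.tgt r) * P (G.tgt r) (G.src r)) := by
  simp only [delayLift, Fintype.sum_sum_type, Sum.elim_inl, Sum.elim_inr, FDelayNode.sum_eq,
    Finset.sum_const, Finset.card_univ, Fintype.card_fin, nsmul_eq_mul]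

theorem PhatFixed_col_last {d : FDelayNode m bvec} (hlast : (d.2 : ℕ) + 1 = bvec d.1) :
    (PhatFixed G P bvec).col (Sum.inr d) =
      Pi.single (Sum.inl (G.tgt d.1)) (P (G.tgt d.1) (G.src d.1)) := by
  ext (i | d')
  · by_cases hi : G.tgt d.1 = i
    · subst hi
      simp [PhatFixed, hlast]
    · simp [PhatFixed, hi, Ne.symm hi]
  · have hend : ¬(d'.1 = d.1 ∧ (d'.2 : ℕ) = d.2 + 1) := fun ⟨hedge, hpos⟩ =>
      d'.2.isLt.ne (by rw [hpos, hlast, hedge])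
    simp [PhatFixed, hend]

theorem PhatFixed_col_of_succ {d d' : FDelayNode m bvec} (hedge : d'.1 = d.1)
    (hpos : (d'.2 : ℕ) = d.2 + 1) :
    (PhatFixed G P bvec).col (Sum.inr d) = Pi.single (Sum.inr d') 1 := by
  ext (i | e)
  · have hnot_last : (d.2 : ℕ) + 1 ≠ bvec d.1 := hpos ▸ hedge ▸ d'.2.isLt.ne
    simp [PhatFixed, hnot_last]
  · simp [PhatFixed, Pi.single_apply, FDelayNode.ext_iff, hedge, hpos]

theorem delayLift_vecMul_PhatFixed_inr (d : FDelayNode m bvec) :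
    (delayLift G P bvec x ᵥ* PhatFixed G P bvec) (Sum.inr d) =
      delayLift G P bvec x (Sum.inr d) := by
  change delayLift G P bvec x ⬝ᵥ (PhatFixed G P bvec).col (Sum.inr d) = _
  rcases (Nat.succ_le_of_lt d.2.isLt).eq_or_lt with hlast | hlt
  · rw [PhatFixed_col_last hlast, dotProduct_single]
    rfl
  · let next : FDelayNode m bvec := ⟨d.1, ⟨d.2 + 1, hlt⟩⟩
    rw [PhatFixed_col_of_succ (d := d) (d' := next) rfl rfl, dotProduct_single, mul_one]
    rfl

theorem PhatFixed_tgt_src (hG : G.IsSimple) (r : Fin m) :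
    PhatFixed G P bvec (Sum.inl (G.tgt r)) (Sum.inl (G.src r)) =
      if bvec r = 0 then P (G.tgt r) (G.src r) else 0 := by
  refine if_congr ⟨?_, fun h => Or.inr ⟨r, rfl, rfl, h⟩⟩ rfl rfl
  rintro (hloop | ⟨e, hsrc, htgt, he⟩)
  · exact absurd hloop.symm (hG.src_ne_tgt r)
  · rwa [← hG.injective_src_tgt (Prod.ext hsrc htgt : (G.src e, G.tgt e) = (G.src r, G.tgt r))]

theorem PhatFixed_inl_inl_of_not_edge (hP : G.Supports P) {i j : Fin n}
    (hij : ¬∃ r, G.src r = j ∧ G.tgt r = i) :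
    PhatFixed G P bvec (Sum.inl i) (Sum.inl j) = P i j := by
  refine ite_eq_left_iff.2 fun hdirect => ?_
  by_contra! hne
  exact (hP i j hne.symm).elim (fun h => hdirect (Or.inl h)) hij

theorem eq_PhatFixed_toBlocks₁₁_add_sum_single (hG : G.IsSimple) (hP : G.Supports P) :
    P = (PhatFixed G P bvec).toBlocks₁₁ +
      ∑ r with 0 < bvec r, Matrix.single (G.tgt r) (G.src r) (P (G.tgt r) (G.src r)) := by
  ext i j
  rw [Matrix.add_apply, Matrix.sum_apply, toBlocks₁₁, Matrix.of_apply, Finset.sum_filter]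
  by_cases hedge : ∃ r, G.src r = j ∧ G.tgt r = i
  · obtain ⟨r, rfl, rfl⟩ := hedge
    rw [PhatFixed_tgt_src hG, Finset.sum_eq_single r]
    · split_ifs <;> simp_all [Nat.pos_iff_ne_zero]
    · intro e _ hne
      have hpair : ¬(G.tgt e = G.tgt r ∧ G.src e = G.src r) := fun h =>
        hne (hG.injective_src_tgt (Prod.ext h.2 h.1))
      simp [hpair]
    · simp
  · have hsingle : ∀ r, ¬(G.tgt r = i ∧ G.src r = j) := fun r h => hedge ⟨r, h.symm⟩
    simp [PhatFixed_inl_inl_of_not_edge hP hedge, hsingle]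

theorem vecMul_PhatFixed_toBlocks₂₁ (w : Fin m → ℝ) :
    (fun d : FDelayNode m bvec => w d.1) ᵥ* (PhatFixed G P bvec).toBlocks₂₁ =
      ∑ r with 0 < bvec r, Pi.single (G.src r) (w r) := by
  ext j
  rw [vecMul, dotProduct, FDelayNode.sum_eq, Finset.sum_filter, Finset.sum_apply]
  refine Finset.sum_congr rfl fun r _ => ?_
  change ∑ k : Fin (bvec r), w r * (if G.src r = j ∧ (k : ℕ) = 0 then 1 else 0) = _
  cases bvec r <;> simp [Fin.sum_univ_succ, Pi.single_apply, eq_comm]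

theorem delayLift_vecMul_PhatFixed_comp_inl (hG : G.IsSimple) (hP : G.Supports P) :
    (delayLift G P bvec x ᵥ* PhatFixed G P bvec) ∘ Sum.inl = x ᵥ* P := by
  let w : Fin m → ℝ := fun r => x (G.tgt r) * P (G.tgt r) (G.src r)
  calc (delayLift G P bvec x ᵥ* PhatFixed G P bvec) ∘ Sum.inl
      = x ᵥ* (PhatFixed G P bvec).toBlocks₁₁ +
          (fun d : FDelayNode m bvec => w d.1) ᵥ* (PhatFixed G P bvec).toBlocks₂₁ :=
        funext fun _ => Fintype.sum_sum_type _
    _ = x ᵥ* (PhatFixed G P bvec).toBlocks₁₁ +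
          ∑ r with 0 < bvec r, Pi.single (G.src r) (w r) := by
        rw [vecMul_PhatFixed_toBlocks₂₁]
    _ = x ᵥ* ((PhatFixed G P bvec).toBlocks₁₁ +
          ∑ r with 0 < bvec r, Matrix.single (G.tgt r) (G.src r) (P (G.tgt r) (G.src r))) := by
        simp only [vecMul_add, vecMul_sum, vecMul_single_eq_pi_single, w]
    _ = x ᵥ* P := by rw [← eq_PhatFixed_toBlocks₁₁_add_sum_single hG hP]

theorem delayLift_vecMul_PhatFixed (hG : G.IsSimple) (hP : G.Supports P) (hx : x ᵥ* P = x) :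
    delayLift G P bvec x ᵥ* PhatFixed G P bvec = delayLift G P bvec x := by
  ext (j | d)
  · have hinl := (delayLift_vecMul_PhatFixed_comp_inl (bvec := bvec) hG hP).trans hx
    exact congrFun hinl j
  · exact delayLift_vecMul_PhatFixed_inr d

end DelayLift

theorem fixed_delay_stationary_distribution_general
    {n m : ℕ} {G : DGraph n m} (hG : G.IsSimple)
    {P : Matrix (Fin n) (Fin n) ℝ} (hP : G.Supports P) (hP_nonneg : ∀ i j, 0 ≤ P i j)
    {x : Fin n → ℝ} (hx : x ᵥ* P = x) (hx_nonneg : 0 ≤ x) (hx_pos : 0 < ∑ i, x i)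
    (bvec : Fin m → ℕ)
    {S : ℝ} (hS : S = ∑ i, x i + ∑ r, (bvec r : ℝ) * (x (G.tgt r) * P (G.tgt r) (G.src r)))
    {pihat : FNode n m bvec → ℝ}
    (hpihat : pihat = Sum.elim (fun i => x i / S)
      (fun d => x (G.tgt d.1) * P (G.tgt d.1) (G.src d.1) / S)) :
    (∀ u, 0 ≤ pihat u) ∧ (∑ u, pihat u = 1) ∧ pihat ᵥ* PhatFixed G P bvec = pihat := by
  have hS_sum : S = ∑ u, delayLift G P bvec x u := hS.trans sum_delayLift.symm
  have hS_pos : 0 < S := by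
    rw [hS]
    exact add_pos_of_pos_of_nonneg hx_pos <| Finset.sum_nonneg fun r _ =>
      mul_nonneg (Nat.cast_nonneg _) (mul_nonneg (hx_nonneg _) (hP_nonneg _ _))
  have hlift : pihat = S⁻¹ • delayLift G P bvec x := by
    ext (i | d) <;> simp [hpihat, delayLift, div_eq_inv_mul]
  subst hlift
  refine ⟨?_, ?_, ?_⟩
  · exact smul_nonneg (inv_nonneg.2 hS_pos.le) (delayLift_nonneg hP_nonneg hx_nonneg)
  · simp only [Pi.smul_apply, smul_eq_mul]
    rw [← Finset.mul_sum, ← hS_sum, inv_mul_cancel₀ hS_pos.ne']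
  · rw [smul_vecMul, delayLift_vecMul_PhatFixed hG hP hx]

/-- **Stationary distribution of the fixed-delay protocol (doubly stochastic `P`).**
With `q_r = P_{j(r) i(r)}` and `S = n + ∑ r, b_r·q_r`, the vector assigning `1/S`
to every compute node and `q_r/S` to every delay node on the chain of edge `r` is
a probability vector and satisfies `π̂ᵀ·P̂ = π̂ᵀ`. -/
theorem fixed_delay_stationary_distribution
    {n m : ℕ} (hn : 0 < n)
    (G : DGraph n m) (P : Matrix (Fin n) (Fin n) ℝ) (hV : G.Valid P)
    (hcol : ∀ j, ∑ i, P i j = 1)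
    (B : ℕ) (bvec : Fin m → ℕ) (hb : ∀ r, bvec r ≤ B)
    (S : ℝ) (hS : S = (n : ℝ) + ∑ r, (bvec r : ℝ) * P (G.tgt r) (G.src r))
    (pihat : FNode n m bvec → ℝ)
    (hpihat : pihat = Sum.elim (fun _ : Fin n => 1 / S)
      (fun d : FDelayNode m bvec => P (G.tgt d.1) (G.src d.1) / S)) :
    (∀ u, 0 ≤ pihat u) ∧ (∑ u, pihat u = 1) ∧
      pihat ᵥ* PhatFixed G P bvec = pihat := by
  have hone : (1 : Fin n → ℝ) ᵥ* P = 1 := funext fun j => by simp [vecMul, dotProduct, hcol j]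
  exact fixed_delay_stationary_distribution_general hV.isSimple hV.supports hV.nonneg hone
    zero_le_one (by simpa using hn) bvec (by simpa using hS) (by simpa using hpihat)
end

section
/- Assume G is symmetric (every undirected edge gives two directed edges), connected, and without self-loops, and let P be the max-weight matrix P = I − (diag(deg) − A)/(d_max + 1), where A is the adjacency matrix, deg the vector of degrees, and d_max = max_i deg_i; P is doubly stochastic. Then for any assignment of fixed delays b_r ≤ B to the directed edges, with b = Σ_r b_r total delay nodes, the vector π̂ defined by π̂_i = (d_max + 1)/(b + n(d_max + 1)) for every compute node i and π̂_k = 1/(b + n(d_max + 1)) for every delay node k is a probability vector and a stationary distribution of P̂: π̂ᵀ·P̂ = π̂ᵀ. In particular the stationary distribution takes only these two values, independently of how the delays are distributed over the links. -/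
open Matrix Filter BigOperators
open scoped Classical

/-- The out-degree of node `i` (for a symmetric graph without self-loops this is
its degree in the undirected sense). -/
def DGraph.deg {n m : ℕ} (G : DGraph n m) (i : Fin n) : ℕ :=
  (Finset.univ.filter (fun e => G.src e = i)).card

/-- Maximum degree of `G`. -/
def DGraph.maxDeg {n m : ℕ} (G : DGraph n m) : ℕ :=
  Finset.univ.sup G.deg

/-!
At stationarity the chain replacing an edge `r` has constant flow, so its nodes must all carry the
mass `π_{j(r)} P_{j(r) i(r)}` that `P` moves across `r`. Conversely, extending any stationary vector
of `P` by these edge flows gives a stationary vector of `P̂`: a delay only splits the column sum at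
`i(r)` differently between direct and delayed edges. The max-weight matrix has unit column sums, so
the constant vector `d_max + 1` is stationary for it, and each of its edges carries flow
`(d_max + 1) · 1 / (d_max + 1) = 1`.
-/

theorem FDelayNode.sum_eq_sum_sum {M : Type*} [AddCommMonoid M] {m : ℕ} {bvec : Fin m → ℕ}
    (f : FDelayNode m bvec → M) : ∑ d, f d = ∑ r, ∑ k : Fin (bvec r), f ⟨r, k⟩ :=
  Fintype.sum_sigma f

theorem sum_fin_ite_val_eq {M : Type*} [AddCommMonoid M] (N a : ℕ) (c : M) :
    ∑ k : Fin N, (if (k : ℕ) = a then c else 0) = if a < N then c else 0 := by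
  rw [Fin.sum_univ_eq_sum_range (fun k => if k = a then c else 0) N]
  simp

namespace DGraph

variable {n m : ℕ} (G : DGraph n m)

section Respects

variable {R : Type*}

/-- The matrix `M` respects `G`: off the diagonal it is supported on the entries `(tgt e, src e)`,
the row index being the receiving node. Unlike for the protocol matrix of `DGraph.Valid`, entries
on edges and on the diagonal may vanish. -/
def Respects [Zero R] (M : Matrix (Fin n) (Fin n) R) : Prop :=
  ∀ i j, M i j ≠ 0 → i = j ∨ ∃ e, G.src e = j ∧ G.tgt e = i

variable {G}

theorem Respects.vecMul_apply [NonUnitalNonAssocSemiring R] {M : Matrix (Fin n) (Fin n) R}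
    (hM : G.Respects M) (hnoSelf : ∀ e, G.src e ≠ G.tgt e)
    (hedgeInj : ∀ e e', G.src e = G.src e' → G.tgt e = G.tgt e' → e = e')
    (x : Fin n → R) (j : Fin n) :
    (x ᵥ* M) j =
      x j * M j j + ∑ r with G.src r = j, x (G.tgt r) * M (G.tgt r) (G.src r) := by
  rw [vecMul, dotProduct, ← Finset.add_sum_erase _ _ (Finset.mem_univ j)]
  congr 1
  symm
  refine Finset.sum_of_injOn G.tgt ?_ ?_ ?_ ?_
  · intro r hr r' hr' htgt
    simp only [Finset.coe_filter, Finset.mem_univ, true_and, Set.mem_ofPred_eq] at hr hr'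
    exact hedgeInj r r' (hr.trans hr'.symm) htgt
  · intro r hr
    simp only [Finset.coe_filter, Finset.mem_univ, true_and, Set.mem_ofPred_eq] at hr
    simpa [← hr] using (hnoSelf r).symm
  · intro i hi hnot_tgt
    by_cases hMij : M i j = 0
    · rw [hMij, mul_zero]
    · obtain hij | ⟨r, hsrc, htgt⟩ := hM i j hMij
      · exact absurd hij (Finset.ne_of_mem_erase hi)
      · exact absurd ⟨r, by simpa using hsrc, htgt⟩ hnot_tgt
  · intro r hr
    rw [(Finset.mem_filter.mp hr).2]

end Respects

section FlowLift

variable (P : Matrix (Fin n) (Fin n) ℝ) (bvec : Fin m → ℕ) (π : Fin n → ℝ)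

/-- The mass that one step `π ↦ π ᵥ* P` moves across the edge `r`. It moves from the row index
`tgt r` to the column index `src r`, against the direction of the edge. -/
def edgeFlow (r : Fin m) : ℝ :=
  π (G.tgt r) * P (G.tgt r) (G.src r)

/-- The extension of a vector on the compute nodes to the augmented graph that gives each delay
node the flow of its edge. -/
def flowLift : FNode n m bvec → ℝ :=
  Sum.elim π fun d => G.edgeFlow P π d.1

theorem sum_flowLift :
    ∑ u, G.flowLift P bvec π u = ∑ i, π i + ∑ r, bvec r * G.edgeFlow P π r := by
  simp [flowLift, FDelayNode.sum_eq_sum_sum]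

variable {P}

theorem Respects.phatFixed_toBlocks₁₁ (hP : G.Respects P) :
    G.Respects (PhatFixed G P bvec).toBlocks₁₁ := by
  intro i j hij
  refine hP i j fun hPij => hij ?_
  simp [toBlocks₁₁, PhatFixed, hPij]

theorem phatFixed_toBlocks₁₁_diag (j : Fin n) : (PhatFixed G P bvec).toBlocks₁₁ j j = P j j := by
  simp [toBlocks₁₁, PhatFixed]

theorem phatFixed_toBlocks₁₁_edge (hnoSelf : ∀ e, G.src e ≠ G.tgt e)
    (hedgeInj : ∀ e e', G.src e = G.src e' → G.tgt e = G.tgt e' → e = e') (r : Fin m) :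
    (PhatFixed G P bvec).toBlocks₁₁ (G.tgt r) (G.src r) =
      if bvec r = 0 then P (G.tgt r) (G.src r) else 0 := by
  have hdirect : (G.tgt r = G.src r ∨
      ∃ r', G.src r' = G.src r ∧ G.tgt r' = G.tgt r ∧ bvec r' = 0) ↔ bvec r = 0 := by
    constructor
    · rintro (hloop | ⟨r', hsrc, htgt, hzero⟩)
      · exact absurd hloop.symm (hnoSelf r)
      · exact hedgeInj r' r hsrc htgt ▸ hzero
    · exact fun hzero => Or.inr ⟨r, rfl, rfl, hzero⟩
  simp [toBlocks₁₁, PhatFixed, hdirect]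

theorem vecMul_phatFixed_toBlocks₁₂ (d : FDelayNode m bvec) :
    (π ᵥ* (PhatFixed G P bvec).toBlocks₁₂) d =
      if (d.2 : ℕ) + 1 = bvec d.1 then G.edgeFlow P π d.1 else 0 := by
  simp [vecMul, dotProduct, toBlocks₁₂, PhatFixed, edgeFlow, ite_and]

theorem vecMul_phatFixed_toBlocks₂₁ (y : Fin m → ℝ) (j : Fin n) :
    ((fun d => y d.1) ᵥ* (PhatFixed G P bvec).toBlocks₂₁) j =
      ∑ r with G.src r = j, if 0 < bvec r then y r else 0 := by
  rw [vecMul, dotProduct, FDelayNode.sum_eq_sum_sum, Finset.sum_filter]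
  refine Finset.sum_congr rfl fun r _ => ?_
  -- `FDelayNode` is not reducible, so `simp` cannot evaluate the block at `⟨r, k⟩`.
  change ∑ k : Fin (bvec r), y r * (if G.src r = j ∧ (k : ℕ) = 0 then 1 else 0) = _
  by_cases hsrc : G.src r = j <;> simp [hsrc, sum_fin_ite_val_eq]

theorem vecMul_phatFixed_toBlocks₂₂ (y : Fin m → ℝ) (d : FDelayNode m bvec) :
    ((fun d' => y d'.1) ᵥ* (PhatFixed G P bvec).toBlocks₂₂) d =
      if (d.2 : ℕ) + 1 < bvec d.1 then y d.1 else 0 := by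
  rw [vecMul, dotProduct, FDelayNode.sum_eq_sum_sum, Fintype.sum_eq_single d.1]
  · change ∑ k : Fin (bvec d.1),
      y d.1 * (if d.1 = d.1 ∧ (k : ℕ) = (d.2 : ℕ) + 1 then 1 else 0) = _
    simp [sum_fin_ite_val_eq]
  · intro r hr
    change ∑ k : Fin (bvec r), y r * (if r = d.1 ∧ (k : ℕ) = (d.2 : ℕ) + 1 then 1 else 0) = 0
    simp [hr]

theorem flowLift_vecMul_phatFixed_eq_elim :
    G.flowLift P bvec π ᵥ* PhatFixed G P bvec =
      Sum.elim
        (π ᵥ* (PhatFixed G P bvec).toBlocks₁₁ +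
          (fun d => G.edgeFlow P π d.1) ᵥ* (PhatFixed G P bvec).toBlocks₂₁)
        (π ᵥ* (PhatFixed G P bvec).toBlocks₁₂ +
          (fun d => G.edgeFlow P π d.1) ᵥ* (PhatFixed G P bvec).toBlocks₂₂) := by
  conv_lhs => rw [← fromBlocks_toBlocks (PhatFixed G P bvec), vecMul_fromBlocks]
  rfl

theorem flowLift_vecMul_phatFixed_inl (hP : G.Respects P) (hnoSelf : ∀ e, G.src e ≠ G.tgt e)
    (hedgeInj : ∀ e e', G.src e = G.src e' → G.tgt e = G.tgt e' → e = e') (j : Fin n) :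
    (G.flowLift P bvec π ᵥ* PhatFixed G P bvec) (Sum.inl j) = (π ᵥ* P) j := by
  rw [flowLift_vecMul_phatFixed_eq_elim, Sum.elim_inl, Pi.add_apply, vecMul_phatFixed_toBlocks₂₁,
    (hP.phatFixed_toBlocks₁₁ G bvec).vecMul_apply hnoSelf hedgeInj,
    hP.vecMul_apply hnoSelf hedgeInj, phatFixed_toBlocks₁₁_diag, add_assoc,
    ← Finset.sum_add_distrib]
  congr 1
  refine Finset.sum_congr rfl fun r _ => ?_
  rw [G.phatFixed_toBlocks₁₁_edge bvec hnoSelf hedgeInj]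
  obtain hzero | hpos := (bvec r).eq_zero_or_pos
  · simp [hzero]
  · simp [hpos, hpos.ne', edgeFlow]

theorem flowLift_vecMul_phatFixed_inr (d : FDelayNode m bvec) :
    (G.flowLift P bvec π ᵥ* PhatFixed G P bvec) (Sum.inr d) = G.edgeFlow P π d.1 := by
  rw [flowLift_vecMul_phatFixed_eq_elim, Sum.elim_inr, Pi.add_apply, vecMul_phatFixed_toBlocks₁₂,
    vecMul_phatFixed_toBlocks₂₂]
  obtain hlast | hinner := (Nat.succ_le_of_lt d.2.isLt).eq_or_lt
  · rw [if_pos hlast, if_neg hlast.not_lt, add_zero]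
  · rw [if_neg hinner.ne, if_pos hinner, zero_add]

variable {π}

theorem flowLift_vecMul_phatFixed (hP : G.Respects P) (hnoSelf : ∀ e, G.src e ≠ G.tgt e)
    (hedgeInj : ∀ e e', G.src e = G.src e' → G.tgt e = G.tgt e' → e = e') (hπ : π ᵥ* P = π) :
    G.flowLift P bvec π ᵥ* PhatFixed G P bvec = G.flowLift P bvec π := by
  funext u
  cases u with
  | inl j => rw [G.flowLift_vecMul_phatFixed_inl bvec π hP hnoSelf hedgeInj, hπ]; rfl
  | inr d => exact G.flowLift_vecMul_phatFixed_inr bvec π d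

end FlowLift

section MaxWeight

/-- The graph with all edges reversed. -/
def reverse : DGraph n m where
  src := G.tgt
  tgt := G.src

/-- Every node has as many incoming as outgoing edges; incoming edges are counted as outgoing edges
of the reversed graph. -/
def IsBalanced : Prop :=
  G.reverse.deg = G.deg

/-- The max-weight matrix `I − (diag(deg) − A) / (d_max + 1)`, with out-degrees if `G` is not
symmetric. -/
noncomputable def maxWeight : Matrix (Fin n) (Fin n) ℝ := fun i j =>
  if i = j then 1 - (G.deg i : ℝ) / ((G.maxDeg : ℝ) + 1)
  else if ∃ e, G.src e = j ∧ G.tgt e = i then 1 / ((G.maxDeg : ℝ) + 1) else 0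

variable {G}

theorem isBalanced_of_symm
    (hedgeInj : ∀ e e', G.src e = G.src e' → G.tgt e = G.tgt e' → e = e')
    (hsym : ∀ e, ∃ e', G.src e' = G.tgt e ∧ G.tgt e' = G.src e) : G.IsBalanced := by
  choose rev hsrc htgt using hsym
  have rev_rev (e) : rev (rev e) = e :=
    hedgeInj _ _ ((hsrc _).trans (htgt e)) ((htgt _).trans (hsrc e))
  funext i
  change (Finset.univ.filter fun e => G.tgt e = i).card =
    (Finset.univ.filter fun e => G.src e = i).card
  exact Finset.card_nbij' rev rev (by simp [Set.MapsTo, hsrc]) (by simp [Set.MapsTo, htgt])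
    (fun e _ => rev_rev e) (fun e _ => rev_rev e)

theorem IsBalanced.transpose_maxWeight (hbal : G.IsBalanced) :
    G.maxWeightᵀ = G.reverse.maxWeight := by
  ext i j
  have hdeg : G.reverse.deg = G.deg := hbal
  have hmax : G.reverse.maxDeg = G.maxDeg := congrArg (Finset.univ.sup ·) hdeg
  rw [transpose_apply, maxWeight, maxWeight, hmax, hdeg]
  by_cases hij : i = j
  · simp [hij]
  · simp [hij, Ne.symm hij, reverse, and_comm]

variable (G)

theorem deg_le_maxDeg (i : Fin n) : G.deg i ≤ G.maxDeg :=
  Finset.le_sup (Finset.mem_univ i)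

theorem maxWeight_nonneg (i j : Fin n) : 0 ≤ G.maxWeight i j := by
  have hdeg : (G.deg i : ℝ) ≤ (G.maxDeg : ℝ) + 1 := by
    exact_mod_cast (G.deg_le_maxDeg i).trans (Nat.le_succ _)
  unfold maxWeight
  split_ifs
  · exact sub_nonneg.mpr (div_le_one_of_le₀ hdeg (by positivity))
  · positivity
  · exact le_rfl

theorem respects_maxWeight : G.Respects G.maxWeight := by
  intro i j hij
  by_contra hne
  rw [not_or] at hne
  exact hij ((if_neg hne.1).trans (if_neg hne.2))

variable {G}

theorem maxWeight_edge (hnoSelf : ∀ e, G.src e ≠ G.tgt e) (r : Fin m) :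
    G.maxWeight (G.tgt r) (G.src r) = 1 / ((G.maxDeg : ℝ) + 1) := by
  rw [maxWeight, if_neg (hnoSelf r).symm, if_pos ⟨r, rfl, rfl⟩]

theorem edgeFlow_maxWeight_const (hnoSelf : ∀ e, G.src e ≠ G.tgt e) (c : ℝ) (r : Fin m) :
    G.edgeFlow G.maxWeight (fun _ => c) r = c / ((G.maxDeg : ℝ) + 1) := by
  rw [edgeFlow, maxWeight_edge hnoSelf, mul_one_div]

theorem one_vecMul_maxWeight (hnoSelf : ∀ e, G.src e ≠ G.tgt e)
    (hedgeInj : ∀ e e', G.src e = G.src e' → G.tgt e = G.tgt e' → e = e') :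
    1 ᵥ* G.maxWeight = 1 := by
  funext j
  rw [G.respects_maxWeight.vecMul_apply hnoSelf hedgeInj]
  simp only [Pi.one_apply, one_mul, maxWeight_edge hnoSelf, Finset.sum_const, nsmul_eq_mul]
  change G.maxWeight j j + (G.deg j : ℝ) * (1 / ((G.maxDeg : ℝ) + 1)) = 1
  rw [maxWeight, if_pos rfl, mul_one_div, sub_add_cancel]

theorem const_vecMul_maxWeight (hnoSelf : ∀ e, G.src e ≠ G.tgt e)
    (hedgeInj : ∀ e e', G.src e = G.src e' → G.tgt e = G.tgt e' → e = e') (c : ℝ) :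
    (fun _ => c) ᵥ* G.maxWeight = fun _ => c := by
  have hsmul : (fun _ : Fin n => c) = c • 1 := by ext; simp
  rw [hsmul, smul_vecMul, one_vecMul_maxWeight hnoSelf hedgeInj]

theorem IsBalanced.maxWeight_mem_doublyStochastic (hbal : G.IsBalanced)
    (hnoSelf : ∀ e, G.src e ≠ G.tgt e)
    (hedgeInj : ∀ e e', G.src e = G.src e' → G.tgt e = G.tgt e' → e = e') :
    G.maxWeight ∈ doublyStochastic ℝ (Fin n) := by
  refine ⟨G.maxWeight_nonneg, ?_, one_vecMul_maxWeight hnoSelf hedgeInj⟩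
  rw [← vecMul_transpose, hbal.transpose_maxWeight]
  exact one_vecMul_maxWeight (fun e => (hnoSelf e).symm)
    fun e e' hsrc htgt => hedgeInj e e' htgt hsrc

end MaxWeight

end DGraph

theorem fixed_delay_stationary_distribution_max_weight_general
    {n m : ℕ} (hn : 0 < n)
    (G : DGraph n m)
    (hnoSelf : ∀ e, G.src e ≠ G.tgt e)
    (hedgeInj : ∀ e e', G.src e = G.src e' → G.tgt e = G.tgt e' → e = e')
    (hbal : G.IsBalanced)
    (P : Matrix (Fin n) (Fin n) ℝ)
    (hP : ∀ i j, P i j =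
      if i = j then 1 - (G.deg i : ℝ) / ((G.maxDeg : ℝ) + 1)
      else if ∃ e, G.src e = j ∧ G.tgt e = i then 1 / ((G.maxDeg : ℝ) + 1) else 0)
    (bvec : Fin m → ℕ)
    (b : ℕ) (hbdef : b = ∑ r, bvec r)
    (pihat : FNode n m bvec → ℝ)
    (hpihat : pihat = Sum.elim
      (fun _ : Fin n =>
        ((G.maxDeg : ℝ) + 1) / ((b : ℝ) + n * ((G.maxDeg : ℝ) + 1)))
      (fun _ : FDelayNode m bvec =>
        1 / ((b : ℝ) + n * ((G.maxDeg : ℝ) + 1)))) :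
    (∀ i j, 0 ≤ P i j) ∧ (∀ i, ∑ j, P i j = 1) ∧ (∀ j, ∑ i, P i j = 1) ∧
    (∀ u, 0 ≤ pihat u) ∧ (∑ u, pihat u = 1) ∧
      pihat ᵥ* PhatFixed G P bvec = pihat := by
  obtain rfl : P = G.maxWeight := Matrix.ext hP
  set D : ℝ := (G.maxDeg : ℝ) + 1
  set S : ℝ := (b : ℝ) + n * D with hS
  have hD : 0 < D := by positivity
  have hS_pos : 0 < S := by positivity
  have hflow (r) : G.edgeFlow G.maxWeight (fun _ => D / S) r = 1 / S := by
    rw [DGraph.edgeFlow_maxWeight_const hnoSelf, div_right_comm, div_self hD.ne']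
  have hlift : pihat = G.flowLift G.maxWeight bvec fun _ => D / S := by
    simp only [hpihat, DGraph.flowLift, hflow]
  obtain ⟨hnonneg, hrow, hcol⟩ :=
    mem_doublyStochastic_iff_sum.mp (hbal.maxWeight_mem_doublyStochastic hnoSelf hedgeInj)
  refine ⟨hnonneg, hrow, hcol, ?_, ?_, ?_⟩
  · rintro (i | d) <;> simp only [hpihat, Sum.elim_inl, Sum.elim_inr] <;> positivity
  · calc
      ∑ u, pihat u = n * (D / S) + b * (1 / S) := by
        rw [hlift, DGraph.sum_flowLift]
        simp [hflow, ← Finset.sum_mul, hbdef]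
      _ = S / S := by rw [hS]; ring
      _ = 1 := div_self hS_pos.ne'
  · rw [hlift]
    exact G.flowLift_vecMul_phatFixed bvec G.respects_maxWeight hnoSelf hedgeInj
      (DGraph.const_vecMul_maxWeight hnoSelf hedgeInj _)

/-- **Stationary distribution of the fixed-delay protocol for the max-weight
matrix.**  If `G` is symmetric, connected and without self-loops and
`P = I − (diag(deg) − A)/(d_max + 1)` is the max-weight matrix, then `P` is doubly
stochastic, and for any assignment of fixed delays `b_r ≤ B` with `b = ∑ r, b_r`
delay nodes, the vector taking the value `(d_max+1)/(b + n(d_max+1))` on every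
compute node and `1/(b + n(d_max+1))` on every delay node is a probability vector
and a stationary distribution of `P̂` — only two values, regardless of how the
delays are distributed over the links. -/
theorem fixed_delay_stationary_distribution_max_weight
    {n m : ℕ} (hn : 0 < n)
    (G : DGraph n m)
    (hnoSelf : ∀ e, G.src e ≠ G.tgt e)
    (hedgeInj : ∀ e e', G.src e = G.src e' → G.tgt e = G.tgt e' → e = e')
    (hsym : ∀ e, ∃ e', G.src e' = G.tgt e ∧ G.tgt e' = G.src e)
    (hconn : ∀ i j : Fin n,
      Relation.ReflTransGen (fun a b => ∃ e, G.src e = a ∧ G.tgt e = b) i j)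
    (P : Matrix (Fin n) (Fin n) ℝ)
    (hP : ∀ i j, P i j =
      if i = j then 1 - (G.deg i : ℝ) / ((G.maxDeg : ℝ) + 1)
      else if ∃ e, G.src e = j ∧ G.tgt e = i then 1 / ((G.maxDeg : ℝ) + 1) else 0)
    (B : ℕ) (bvec : Fin m → ℕ) (hb : ∀ r, bvec r ≤ B)
    (b : ℕ) (hbdef : b = ∑ r, bvec r)
    (pihat : FNode n m bvec → ℝ)
    (hpihat : pihat = Sum.elim
      (fun _ : Fin n =>
        ((G.maxDeg : ℝ) + 1) / ((b : ℝ) + n * ((G.maxDeg : ℝ) + 1)))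
      (fun _ : FDelayNode m bvec =>
        1 / ((b : ℝ) + n * ((G.maxDeg : ℝ) + 1)))) :
    (∀ i j, 0 ≤ P i j) ∧ (∀ i, ∑ j, P i j = 1) ∧ (∀ j, ∑ i, P i j = 1) ∧
    (∀ u, 0 ≤ pihat u) ∧ (∑ u, pihat u = 1) ∧
      pihat ᵥ* PhatFixed G P bvec = pihat :=
  fixed_delay_stationary_distribution_max_weight_general hn G hnoSelf hedgeInj
    (DGraph.isBalanced_of_symm hedgeInj hsym) P hP bvec b hbdef pihat hpihat
end

section
/- Let n ≥ 1, b ≥ 0, N = n + b, and let Q be an N×N column-stochastic matrix whose powers Q^t converge entrywise, as t → ∞, to a limit Q^∞ all of whose columns are equal. For x ∈ ℝⁿ set ŝ(0) = (x, 0_b) ∈ ℝ^N and ŵ(0) = (1_n, 0_b) ∈ ℝ^N. Then for every index i with (Q^∞)_{i1} > 0, lim_{t→∞} (Q^t·ŝ(0))_i / (Q^t·ŵ(0))_i = (1/n)·Σ_{j=1}^n x_j; i.e., Push-Sum run with the column-stochastic delayed protocol Q, with delay nodes initialized to zero sum and zero weight, converges at every such node to the true average of the compute nodes' initial values. -/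
open Matrix Filter BigOperators

/-! Once row `i` of `A t` tends to a constant row `c`, the initial vector enters the limit of
`(A t *ᵥ v) i` only through its total mass: the limit is `c * ∑ j, v j`. The factor `c` cancels in
the ratio of sum to weight, leaving the ratio of the two total masses, to which delay nodes with
zero sum and zero weight contribute nothing. -/

section

variable {ι κ m d R : Type*} [Fintype m]

theorem mulVec_sumElim_zero [Fintype d] [NonUnitalNonAssocSemiring R]
    (A : Matrix ι (m ⊕ d) R) (v : m → R) :
    A *ᵥ Sum.elim v (fun _ => 0) = A.toCols₁ *ᵥ v := by
  ext i
  simp [mulVec, dotProduct]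

theorem tendsto_mulVec_apply_of_tendsto_const_row [NonUnitalNonAssocSemiring R]
    [TopologicalSpace R] [IsTopologicalSemiring R] {l : Filter κ} {A : κ → Matrix ι m R} {i : ι}
    {c : R} (hA : ∀ j, Tendsto (fun t => A t i j) l (nhds c)) (v : m → R) :
    Tendsto (fun t => (A t *ᵥ v) i) l (nhds (c * ∑ j, v j)) := by
  rw [Finset.mul_sum]
  exact tendsto_finsetSum _ fun j _ => (hA j).mul_const (v j)

variable [Semifield R] [TopologicalSpace R] [IsTopologicalSemiring R] [ContinuousInv₀ R]

theorem tendsto_mulVec_div_mulVec_of_tendsto_const_row {l : Filter κ} {A : κ → Matrix ι m R}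
    {i : ι} {c : R} (hA : ∀ j, Tendsto (fun t => A t i j) l (nhds c)) (hc : c ≠ 0)
    (v : m → R) {w : m → R} (hw : ∑ j, w j ≠ 0) :
    Tendsto (fun t => (A t *ᵥ v) i / (A t *ᵥ w) i) l (nhds ((∑ j, v j) / ∑ j, w j)) := by
  rw [← mul_div_mul_left _ _ hc]
  exact (tendsto_mulVec_apply_of_tendsto_const_row hA v).div
    (tendsto_mulVec_apply_of_tendsto_const_row hA w) (mul_ne_zero hc hw)

/-- `m` and `d` index the compute and the delay nodes; `A t` is the transition matrix from time `0`
to time `t`, which for a time-varying protocol need not be a power of one matrix. -/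
theorem pushSum_fixed_delays_converges_to_average_general [Fintype d] {l : Filter κ}
    {A : κ → Matrix ι (m ⊕ d) R} {i : ι} {c : R}
    (hA : ∀ j, Tendsto (fun t => A t i (Sum.inl j)) l (nhds c)) (hc : c ≠ 0)
    (hm : (Fintype.card m : R) ≠ 0) (x : m → R) :
    Tendsto
      (fun t =>
        (A t *ᵥ Sum.elim x (fun _ => 0)) i / (A t *ᵥ Sum.elim (fun _ => 1) (fun _ => 0)) i)
      l (nhds ((∑ j, x j) / Fintype.card m)) := by
  have total_weight : ∑ _j : m, (1 : R) = Fintype.card m := by simp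
  simp only [mulVec_sumElim_zero]
  rw [← total_weight] at hm ⊢
  exact tendsto_mulVec_div_mulVec_of_tendsto_const_row hA hc x hm

end

/-- **Push-Sum with fixed delays converges to the true average.**
`Q` is the column-stochastic fixed-delay augmentation, acting on `n` compute nodes
(`Sum.inl`) and `b` delay nodes (`Sum.inr`).  Push-Sum is initialized with
`ŝ(0) = (x, 0_b)` and `ŵ(0) = (1_n, 0_b)`.  If the powers `Q ^ t` converge entrywise
to a limit `Qinf` all of whose columns are equal, then at every index `i` with
`(Qinf)_{i,1} > 0` (column of the first compute node) the ratio
`(Q^t ŝ(0))_i / (Q^t ŵ(0))_i` converges to `(1/n) ∑ j, x j`. -/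
theorem pushSum_fixed_delays_converges_to_average
    (n b : ℕ) (hn : 0 < n)
    (Q : Matrix (Fin n ⊕ Fin b) (Fin n ⊕ Fin b) ℝ)
    (hnonneg : ∀ i j, 0 ≤ Q i j)
    (hcolsum : ∀ j, ∑ i, Q i j = 1)
    (Qinf : Matrix (Fin n ⊕ Fin b) (Fin n ⊕ Fin b) ℝ)
    (hconv : ∀ i j,
      Tendsto (fun t : ℕ => (Q ^ t) i j) atTop (nhds (Qinf i j)))
    (hcols : ∀ i j j', Qinf i j = Qinf i j')
    (x : Fin n → ℝ) (i : Fin n ⊕ Fin b)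
    (hi : 0 < Qinf i (Sum.inl ⟨0, hn⟩)) :
    Tendsto
      (fun t : ℕ =>
        ((Q ^ t) *ᵥ (Sum.elim x (fun _ => (0 : ℝ)))) i /
          ((Q ^ t) *ᵥ (Sum.elim (fun _ => (1 : ℝ)) (fun _ => (0 : ℝ)))) i)
      atTop (nhds ((∑ j, x j) / n)) := by
  simpa only [Fintype.card_fin] using pushSum_fixed_delays_converges_to_average_general
    (fun j => hcols i (.inl j) _ ▸ hconv i (.inl j)) hi.ne' (by simpa using hn.ne') x
end

section
/- Let P be an n×n column-stochastic matrix whose powers P^t converge entrywise, as t → ∞, to a limit P^∞ all of whose columns are equal. Then for every initial vector x(0) ∈ ℝⁿ and every index i with (P^∞)_{i1} > 0, lim_{t→∞} (P^t·x(0))_i / (P^t·1_n)_i = (1/n)·Σ_{j=1}^n x_j(0); i.e., Push-Sum with protocol P converges at every such node to the average of the initial values, without requiring P to be doubly stochastic or its stationary distribution to be known. -/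
open Matrix Filter BigOperators

/-!
If every entry of a row of the protocol tends to the same `c ≠ 0`, the sum at that node tends to
`c * ∑ j, x j` and its weight to `c` times the number of nodes. The unknown factor `c` cancels in
the ratio.
-/

open scoped Topology

section RowLimits

variable {ι m n R : Type*} [Fintype n] [TopologicalSpace R] {l : Filter ι}
  {A : ι → Matrix m n R} {i : m}

theorem tendsto_mulVec_apply [NonUnitalNonAssocSemiring R] [ContinuousAdd R] [ContinuousMul R]
    {b : n → R} (hA : ∀ j, Tendsto (fun t => A t i j) l (𝓝 (b j))) (x : n → R) :
    Tendsto (fun t => (A t *ᵥ x) i) l (𝓝 (b ⬝ᵥ x)) :=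
  ((continuous_id.dotProduct continuous_const).tendsto b).comp (tendsto_pi_nhds.2 hA)

theorem tendsto_mulVec_apply_of_tendsto_const [NonUnitalNonAssocSemiring R] [ContinuousAdd R]
    [ContinuousMul R] {c : R} (hA : ∀ j, Tendsto (fun t => A t i j) l (𝓝 c)) (x : n → R) :
    Tendsto (fun t => (A t *ᵥ x) i) l (𝓝 (c * ∑ j, x j)) := by
  simpa only [dotProduct, Finset.mul_sum] using tendsto_mulVec_apply hA x

theorem pushSum_converges_to_average_general [Semifield R] [ContinuousAdd R] [ContinuousMul R]
    [ContinuousInv₀ R] {c : R} (hn : (Fintype.card n : R) ≠ 0) (hc : c ≠ 0)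
    (hA : ∀ j, Tendsto (fun t => A t i j) l (𝓝 c)) (x : n → R) :
    Tendsto (fun t => (A t *ᵥ x) i / (A t *ᵥ fun _ => 1) i) l
      (𝓝 ((∑ j, x j) / Fintype.card n)) := by
  have hsum : Tendsto (fun t => (A t *ᵥ x) i) l (𝓝 (c * ∑ j, x j)) :=
    tendsto_mulVec_apply_of_tendsto_const hA x
  have hweight : Tendsto (fun t => (A t *ᵥ fun _ => 1) i) l (𝓝 (c * Fintype.card n)) := by
    simpa using tendsto_mulVec_apply_of_tendsto_const hA fun _ => 1
  rw [← mul_div_mul_left _ _ hc]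
  exact hsum.div hweight (mul_ne_zero hc hn)

end RowLimits

/-- **Push-Sum consensus converges to the average.**
Let `P` be an `n × n` column-stochastic matrix whose powers `P ^ t` converge entrywise
to a limit `Pinf` all of whose columns are equal.  Then for every initial vector `x0`
and every index `i` whose limiting first-column entry is positive, the Push-Sum ratio
`(P ^ t ⬝ x0)_i / (P ^ t ⬝ 1)_i` converges to the average `(∑ j, x0 j) / n`. -/
theorem pushSum_converges_to_average
    (n : ℕ) (hn : 0 < n) (P : Matrix (Fin n) (Fin n) ℝ)
    (hnonneg : ∀ i j, 0 ≤ P i j)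
    (hcol : ∀ j : Fin n, ∑ i, P i j = 1)
    (Pinf : Matrix (Fin n) (Fin n) ℝ)
    (hconv : ∀ i j : Fin n,
      Tendsto (fun t : ℕ => (P ^ t) i j) atTop (nhds (Pinf i j)))
    (hcols : ∀ i j j' : Fin n, Pinf i j = Pinf i j')
    (x0 : Fin n → ℝ) (i : Fin n) (hi : 0 < Pinf i ⟨0, hn⟩) :
    Tendsto
      (fun t : ℕ => ((P ^ t) *ᵥ x0) i / ((P ^ t) *ᵥ (fun _ => (1 : ℝ))) i)
      atTop (nhds ((∑ j, x0 j) / n)) := by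
  simpa using pushSum_converges_to_average_general (by simpa using hn.ne') hi.ne'
    (fun j => hcols i j ⟨0, hn⟩ ▸ hconv i j) x0
end
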